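/- K-user system error exponent (Corollary 2). Fix for each user k a finite rate set {r_{k,1},…,r_{k,M}} ⊂ [0,∞) and input distributions P_{X_k|r} on 𝒳_k, and an operation region 𝓡 ⊆ 𝒢 = ∏_k {r_{k,1},…,r_{k,M}} with 𝓡 and 𝒢∖𝓡 nonempty. Then there exists a sequence of decoders (D_N)_{N≥1} such that liminf_{N→∞} −(1/N)·log P_es(D_N) ≥ min{ min_{S⊊{1,…,K}} min_{r,r̃∈𝓡 : r_S = r̃_S} E_m^S(r,r̃), min_{S⊊{1,…,K}} min_{r∈𝓡, r̃∈𝒢∖𝓡 : r_S = r̃_S} E_i^S(r,r̃) }, where S ranges over proper subsets of {1,…,K} and inner minima over empty index sets are omitted (treated as +∞). -/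

import Mathlib

open scoped BigOperators Classical

noncomputable section

/-- `W` is a discrete memoryless multiple access channel. -/
def IsMAC {K : ℕ} {𝓧 : Fin K → Type*} {𝓨 : Type*} [Fintype 𝓨]
    (W : (∀ k, 𝓧 k) → 𝓨 → ℝ) : Prop :=
  (∀ x y, 0 ≤ W x y) ∧ ∀ x, ∑ y, W x y = 1

/-- `P` is a probability distribution on `𝓧`. -/
def IsDist {𝓧 : Type*} [Fintype 𝓧] (P : 𝓧 → ℝ) : Prop :=
  (∀ x, 0 ≤ P x) ∧ ∑ x, P x = 1

/-- The `N`-fold memoryless extension `W^N(y|(x_1,…,x_K))`. -/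
def WnK {K : ℕ} {𝓧 : Fin K → Type*} {𝓨 : Type*} (W : (∀ k, 𝓧 k) → 𝓨 → ℝ)
    {N : ℕ} (x : ∀ k, Fin N → 𝓧 k) (y : Fin N → 𝓨) : ℝ :=
  ∏ j, W (fun k => x k j) (y j)

/-- Merge single-letter inputs indexed by a subset `S` and by its complement
into a full input tuple. -/
def mergeS {K : ℕ} {𝓧 : Fin K → Type*} (S : Finset (Fin K))
    (xs : ∀ k : {k : Fin K // k ∈ S}, 𝓧 k.1)
    (xb : ∀ k : {k : Fin K // k ∉ S}, 𝓧 k.1) : ∀ k, 𝓧 k :=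
  fun k => if h : k ∈ S then xs ⟨k, h⟩ else xb ⟨k, h⟩

/-- Number of messages of user `k` at rate index `i`: `⌊e^{N r_{k,i}}⌋`. -/
def numMsgK {K M : ℕ} (N : ℕ) (rate : Fin K → Fin M → ℝ) (k : Fin K) (i : Fin M) : ℕ :=
  ⌊Real.exp (N * rate k i)⌋₊

/-- A realization of the random codebooks of all `K` users. -/
abbrev CbkK {K M : ℕ} (𝓧 : Fin K → Type*) (N : ℕ) (rate : Fin K → Fin M → ℝ) : Type _ :=
  ∀ k, (i : Fin M) → Fin (numMsgK N rate k i) → Fin N → 𝓧 k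

/-- A message-and-rate vector pair: for each user, a rate index together with a message. -/
abbrev MsgK {K M : ℕ} (N : ℕ) (rate : Fin K → Fin M → ℝ) : Type :=
  ∀ k, (i : Fin M) × Fin (numMsgK N rate k i)

/-- The rate (index) vector of a message-and-rate vector pair. -/
def rv {K M : ℕ} {N : ℕ} {rate : Fin K → Fin M → ℝ} (p : MsgK N rate) : Fin K → Fin M :=
  fun k => (p k).1

/-- The transmitted codewords of a message-and-rate vector pair, in codebooks `c`. -/
def cw {K M : ℕ} {𝓧 : Fin K → Type*} {N : ℕ} {rate : Fin K → Fin M → ℝ}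
    (c : CbkK 𝓧 N rate) (p : MsgK N rate) : ∀ k, Fin N → 𝓧 k :=
  fun k => c k (p k).1 (p k).2

/-- Probability of a realization of the codebooks: all symbols independent,
user `k`'s codewords of rate index `i` having symbol distribution `Pd k i`. -/
def cbkProbK {K M : ℕ} {𝓧 : Fin K → Type*} [∀ k, Fintype (𝓧 k)] {N : ℕ}
    (rate : Fin K → Fin M → ℝ) (Pd : ∀ k, Fin M → 𝓧 k → ℝ) (c : CbkK 𝓧 N rate) : ℝ :=
  ∏ k, ∏ i, ∏ w, ∏ j, Pd k i (c k i w j)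

/-- The probability of the event `E` of the codebooks and the channel output,
when the message-and-rate vector pair `p` is transmitted. -/
def prTxK {K M : ℕ} {𝓧 : Fin K → Type*} [∀ k, Fintype (𝓧 k)]
    {𝓨 : Type*} [Fintype 𝓨] (W : (∀ k, 𝓧 k) → 𝓨 → ℝ) {N : ℕ}
    (rate : Fin K → Fin M → ℝ) (Pd : ∀ k, Fin M → 𝓧 k → ℝ) (p : MsgK N rate)
    (E : CbkK 𝓧 N rate → (Fin N → 𝓨) → Prop) : ℝ :=
  ∑ c : CbkK 𝓧 N rate, ∑ y : Fin N → 𝓨,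
    cbkProbK rate Pd c * WnK W (cw c p) y * (if E c y then (1:ℝ) else 0)

/-- The Gallager-type sum appearing in the exponent `E_m(S, ·)`:
the distributions `P k` correspond to `P_{X_k|r_k}`, `Q k` to `P_{X_k|r̃_k}`. -/
def GmK {K : ℕ} {𝓧 : Fin K → Type*} [∀ k, Fintype (𝓧 k)] {𝓨 : Type*} [Fintype 𝓨]
    (W : (∀ k, 𝓧 k) → 𝓨 → ℝ) (S : Finset (Fin K))
    (P Q : ∀ k, 𝓧 k → ℝ) (ρ s : ℝ) : ℝ :=
  ∑ y : 𝓨, ∑ xs : ∀ k : {k : Fin K // k ∈ S}, 𝓧 k.1,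
    (∏ k, P k.1 (xs k)) *
      ((∑ xb : ∀ k : {k : Fin K // k ∉ S}, 𝓧 k.1,
          (∏ k, P k.1 (xb k)) * W (mergeS S xs xb) y ^ (1 - s)) *
        (∑ xb : ∀ k : {k : Fin K // k ∉ S}, 𝓧 k.1,
          (∏ k, Q k.1 (xb k)) * W (mergeS S xs xb) y ^ (s / ρ)) ^ ρ)

/-- The exponent `E_m(S, r̃, P_{X|r}, P_{X|r̃})`, where `rsum = Σ_{k∉S} r̃_k`. -/
def EmK {K : ℕ} {𝓧 : Fin K → Type*} [∀ k, Fintype (𝓧 k)] {𝓨 : Type*} [Fintype 𝓨]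
    (W : (∀ k, 𝓧 k) → 𝓨 → ℝ) (S : Finset (Fin K)) (rsum : ℝ)
    (P Q : ∀ k, 𝓧 k → ℝ) : ℝ :=
  sSup ((fun ρ => -ρ * rsum +
    sSup ((fun s => -Real.log (GmK W S P Q ρ s)) '' Set.Ioc (0:ℝ) 1)) '' Set.Ioc (0:ℝ) 1)

/-- The sum appearing in the exponent `E_i(S, ·)`:
the distributions `P k` correspond to `P_{X_k|r_k}`, `Q k` to `P_{X_k|r'_k}`. -/
def GiK {K : ℕ} {𝓧 : Fin K → Type*} [∀ k, Fintype (𝓧 k)] {𝓨 : Type*} [Fintype 𝓨]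
    (W : (∀ k, 𝓧 k) → 𝓨 → ℝ) (S : Finset (Fin K))
    (P Q : ∀ k, 𝓧 k → ℝ) (ρ s : ℝ) : ℝ :=
  ∑ y : 𝓨, ∑ xs : ∀ k : {k : Fin K // k ∈ S}, 𝓧 k.1,
    (∏ k, P k.1 (xs k)) *
      ((∑ xb : ∀ k : {k : Fin K // k ∉ S}, 𝓧 k.1,
          (∏ k, P k.1 (xb k)) * W (mergeS S xs xb) y ^ (s / (s + ρ))) ^ (s + ρ) *
        (∑ xb : ∀ k : {k : Fin K // k ∉ S}, 𝓧 k.1,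
          (∏ k, Q k.1 (xb k)) * W (mergeS S xs xb) y) ^ (1 - s))

/-- The exponent `E_i^{S,ρ,s}(r, r')` with explicit parameters `ρ, s`,
where `rsum = Σ_{k∉S} r_k`. -/
def EiKP {K : ℕ} {𝓧 : Fin K → Type*} [∀ k, Fintype (𝓧 k)] {𝓨 : Type*} [Fintype 𝓨]
    (W : (∀ k, 𝓧 k) → 𝓨 → ℝ) (S : Finset (Fin K)) (rsum ρ s : ℝ)
    (P Q : ∀ k, 𝓧 k → ℝ) : ℝ :=
  -ρ * rsum - Real.log (GiK W S P Q ρ s)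

/-- The exponent `E_i(S, r, r̃)`, where `rsum = Σ_{k∉S} r_k`. -/
def EiK {K : ℕ} {𝓧 : Fin K → Type*} [∀ k, Fintype (𝓧 k)] {𝓨 : Type*} [Fintype 𝓨]
    (W : (∀ k, 𝓧 k) → 𝓨 → ℝ) (S : Finset (Fin K)) (rsum : ℝ)
    (P Q : ∀ k, 𝓧 k → ℝ) : ℝ :=
  sSup ((fun ρ =>
    sSup ((fun s => EiKP W S rsum ρ s P Q) '' Set.Ioc (0:ℝ) (1 - ρ))) '' Set.Ioo (0:ℝ) 1)

/-- The system error probability of the decoder `D`: the maximum, over all transmitted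
message-and-rate vector pairs, of the decoding error probability (rate vector in the
operation region `R`) and the collision miss detection probability (rate vector
outside `R`). -/
def PesK {K M : ℕ} {𝓧 : Fin K → Type*} [∀ k, Fintype (𝓧 k)]
    {𝓨 : Type*} [Fintype 𝓨] (W : (∀ k, 𝓧 k) → 𝓨 → ℝ) (N : ℕ)
    (rate : Fin K → Fin M → ℝ) (Pd : ∀ k, Fin M → 𝓧 k → ℝ)
    (R : Finset (Fin K → Fin M))
    (D : CbkK 𝓧 N rate → (Fin N → 𝓨) → Option (MsgK N rate)) : ℝ :=
  sSup (Set.range (fun p : MsgK N rate =>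
    if rv p ∈ R then prTxK W rate Pd p (fun c y => D c y ≠ some p)
    else prTxK W rate Pd p (fun c y => D c y ≠ none)))


set_option linter.unusedSectionVars false
set_option linter.unusedVariables false

/-! ### Auxiliary definitions and lemmas -/

/-- Take the coordinates in `S` from `x`, the others from `x'`. -/
def mrg {K : ℕ} {β : Fin K → Type*} (S : Finset (Fin K)) (x x' : ∀ k, β k) : ∀ k, β k :=
  fun k => if k ∈ S then x k else x' k

lemma mrg_self {K : ℕ} {β : Fin K → Type*} (S : Finset (Fin K)) (x : ∀ k, β k) :
    mrg S x x = x := by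
  funext k; simp [mrg]

lemma mrg_mrg_left {K : ℕ} {β : Fin K → Type*} (S : Finset (Fin K)) (x x' z : ∀ k, β k) :
    mrg S (mrg S x x') z = mrg S x z := by
  funext k; by_cases h : k ∈ S <;> simp [mrg, h]

lemma sum_prod_dist {K : ℕ} {β : Fin K → Type*} [∀ k, Fintype (β k)]
    (μ : ∀ k, β k → ℝ) (hμ : ∀ k, ∑ v, μ k v = 1) :
    ∑ x : ∀ k, β k, ∏ k, μ k (x k) = 1 := by
  rw [← Fintype.prod_sum]
  simp [hμ]

lemma sum_mrg {K : ℕ} {β : Fin K → Type*} [∀ k, Fintype (β k)] (S : Finset (Fin K))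
    (μ ν : ∀ k, β k → ℝ) (h : ∀ k ∈ S, μ k = ν k) (hμ : ∀ k, ∑ v, μ k v = 1)
    (H : (∀ k, β k) → ℝ) :
    ∑ x : ∀ k, β k, (∏ k, μ k (x k)) * ∑ x' : ∀ k, β k, (∏ k, ν k (x' k)) * H (mrg S x x')
      = ∑ x : ∀ k, β k, (∏ k, ν k (x k)) * H x := by
  have e1 : ∑ x : ∀ k, β k, (∏ k, ν k (x k)) * H x
      = ∑ z : (∀ k, β k) × (∀ k, β k), (∏ k, μ k (z.1 k)) * ((∏ k, ν k (z.2 k)) * H z.2) := by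
    rw [Fintype.sum_prod_type]
    simp only [← Finset.mul_sum]
    rw [← Finset.sum_mul, sum_prod_dist μ hμ, one_mul]
  rw [e1]
  simp only [Finset.mul_sum]
  rw [← Fintype.sum_prod_type
    (f := fun z : (∀ k, β k) × (∀ k, β k) =>
      (∏ k, μ k (z.1 k)) * ((∏ k, ν k (z.2 k)) * H (mrg S z.1 z.2)))]
  have hinv : Function.Involutive
      (fun z : (∀ k, β k) × (∀ k, β k) => (mrg S z.2 z.1, mrg S z.1 z.2)) := by
    rintro ⟨x, x'⟩
    ext k <;> by_cases hk : k ∈ S <;> simp [mrg, hk]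
  refine Fintype.sum_bijective _ hinv.bijective _ _ ?_
  rintro ⟨x, x'⟩
  simp only
  rw [← mul_assoc, ← mul_assoc, ← Finset.prod_mul_distrib, ← Finset.prod_mul_distrib]
  congr 1
  refine Finset.prod_congr rfl fun k _ => ?_
  by_cases hk : k ∈ S
  · simp [mrg, hk, h k hk, mul_comm]
  · simp [mrg, hk]

/-- Replace all codewords of `d` used by `p` by those of `c`. -/
def mixC {K M : ℕ} {𝓧 : Fin K → Type*} {N : ℕ} {rate : Fin K → Fin M → ℝ}
    (p : MsgK N rate) (c d : CbkK 𝓧 N rate) : CbkK 𝓧 N rate :=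
  fun k i w => if p k = ⟨i, w⟩ then c k i w else d k i w

section codebook
variable {K M : ℕ} {𝓧 : Fin K → Type*} [∀ k, Fintype (𝓧 k)]
    {𝓨 : Type*} [Fintype 𝓨] {N : ℕ} {rate : Fin K → Fin M → ℝ}

lemma cw_mixC_self (p : MsgK N rate) (c d : CbkK 𝓧 N rate) :
    cw (mixC p c d) p = cw c p := by
  funext k; simp [cw, mixC]

/-- The set of users on which two message-and-rate pairs agree. -/
def agr (p p' : MsgK N rate) : Finset (Fin K) := Finset.univ.filter fun k => p k = p' k

lemma cw_mixC (p p' : MsgK N rate) (c d : CbkK 𝓧 N rate) :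
    cw (mixC p c d) p' = mrg (agr p p') (cw c p) (cw d p') := by
  funext k
  by_cases h : p k = p' k
  · have : k ∈ agr p p' := by simp [agr, h]
    simp [cw, mixC, mrg, this, h]
    rw [h]
  · have : k ∉ agr p p' := by simp [agr, h]
    simp [cw, mixC, mrg, this, h]

lemma cw_eq_mrg (p p' : MsgK N rate) (c : CbkK 𝓧 N rate) :
    cw c p' = mrg (agr p p') (cw c p) (cw c p') := by
  have := cw_mixC p p' c c
  have h2 : mixC p c c = c := by funext k i w; simp [mixC]
  rwa [h2] at this

/-- `N`-letter product distribution. -/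
def PN (P : ∀ k, 𝓧 k → ℝ) {N : ℕ} (x : ∀ k, Fin N → 𝓧 k) : ℝ := ∏ k, ∏ j, P k (x k j)

lemma sum_word (P : ∀ k, 𝓧 k → ℝ) (hP : ∀ k, IsDist (P k)) (k : Fin K) :
    ∑ v : Fin N → 𝓧 k, ∏ j, P k (v j) = 1 := by
  rw [← Fintype.prod_sum]
  simp [(hP k).2]

lemma PN_nonneg (P : ∀ k, 𝓧 k → ℝ) (hP : ∀ k, IsDist (P k)) (x : ∀ k, Fin N → 𝓧 k) :
    0 ≤ PN P x :=
  Finset.prod_nonneg fun k _ => Finset.prod_nonneg fun j _ => (hP k).1 _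

lemma sum_PN (P : ∀ k, 𝓧 k → ℝ) (hP : ∀ k, IsDist (P k)) :
    ∑ x : ∀ k, Fin N → 𝓧 k, PN P x = 1 :=
  sum_prod_dist (fun k (v : Fin N → 𝓧 k) => ∏ j, P k (v j)) (fun k => sum_word P hP k)

lemma sum_PN_mrg (S : Finset (Fin K)) (P Q : ∀ k, 𝓧 k → ℝ) (hP : ∀ k, IsDist (P k))
    (h : ∀ k ∈ S, P k = Q k) (H : (∀ k, Fin N → 𝓧 k) → ℝ) :
    ∑ x : ∀ k, Fin N → 𝓧 k, PN P x * ∑ x' : ∀ k, Fin N → 𝓧 k, PN Q x' * H (mrg S x x')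
      = ∑ x : ∀ k, Fin N → 𝓧 k, PN Q x * H x :=
  sum_mrg S (fun k (v : Fin N → 𝓧 k) => ∏ j, P k (v j)) (fun k v => ∏ j, Q k (v j))
    (fun k hk => by rw [h k hk]) (fun k => sum_word P hP k) H

lemma sum_cbk_prod (h : ∀ k (i : Fin M), Fin (numMsgK N rate k i) → (Fin N → 𝓧 k) → ℝ) :
    ∑ c : CbkK 𝓧 N rate, ∏ k, ∏ i, ∏ w, h k i w (c k i w)
      = ∏ k, ∏ i, ∏ w, ∑ v, h k i w v := by
  simp only [Fintype.prod_sum]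

variable (Pd : ∀ k, Fin M → 𝓧 k → ℝ)

lemma cbk_nonneg (hPd : ∀ k i, IsDist (Pd k i)) (c : CbkK 𝓧 N rate) :
    0 ≤ cbkProbK rate Pd c :=
  Finset.prod_nonneg fun k _ => Finset.prod_nonneg fun i _ => Finset.prod_nonneg fun w _ =>
    Finset.prod_nonneg fun j _ => (hPd k i).1 _

lemma cbk_sum (hPd : ∀ k i, IsDist (Pd k i)) :
    ∑ c : CbkK 𝓧 N rate, cbkProbK rate Pd c = 1 := by
  have := sum_cbk_prod (N := N) (rate := rate) (𝓧 := 𝓧)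
    (fun k i _ v => ∏ j, Pd k i (v j))
  simp only [cbkProbK]
  rw [this]
  refine Finset.prod_eq_one fun k _ => Finset.prod_eq_one fun i _ =>
    Finset.prod_eq_one fun w _ => ?_
  exact sum_word (fun k => Pd k i) (fun k => hPd k i) k

lemma cbk_marg_aux (hPd : ∀ k i, IsDist (Pd k i)) (p : MsgK N rate)
    (x : ∀ k, Fin N → 𝓧 k) :
    ∑ c : CbkK 𝓧 N rate, cbkProbK rate Pd c * (if cw c p = x then 1 else 0)
      = PN (fun k => Pd k (rv p k)) x := by
  have h1 : ∀ c : CbkK 𝓧 N rate, cbkProbK rate Pd c * (if cw c p = x then (1:ℝ) else 0)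
      = ∏ k, ∏ i, ∏ w, (∏ j, Pd k i (c k i w j)) *
          (if p k = ⟨i, w⟩ then (if c k i w = x k then (1:ℝ) else 0) else 1) := by
    intro c
    simp only [Finset.prod_mul_distrib, cbkProbK]
    congr 1
    have : ∀ k, ∏ i, ∏ w, (if p k = ⟨i, w⟩ then (if c k i w = x k then (1:ℝ) else 0) else 1)
        = if cw c p k = x k then 1 else 0 := by
      intro k
      rw [← Fintype.prod_sigma' (f := fun i w => (if p k = ⟨i, w⟩ then (if c k i w = x k then (1:ℝ) else 0) else 1))]
      rw [Finset.prod_eq_single (p k)]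
      · simp only [cw]
        split_ifs <;> simp_all
      · intro b _ hb
        rw [if_neg]
        exact fun h => hb h.symm
      · simp
    simp only [this]
    by_cases h : cw c p = x
    · simp [h]
    · rw [if_neg h]
      obtain ⟨k, hk⟩ := Function.ne_iff.mp h
      symm
      exact Finset.prod_eq_zero (Finset.mem_univ k) (by simp [hk])
  simp only [h1]
  rw [sum_cbk_prod (N := N) (rate := rate) (𝓧 := 𝓧) (fun k i w v => (∏ j, Pd k i (v j)) *
          (if p k = ⟨i, w⟩ then (if v = x k then (1:ℝ) else 0) else 1))]
  unfold PN
  refine Finset.prod_congr rfl fun k _ => ?_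
  rw [← Fintype.prod_sigma' (f := fun i w => ∑ v : Fin N → 𝓧 k, (∏ j, Pd k i (v j)) *
          (if p k = ⟨i, w⟩ then (if v = x k then (1:ℝ) else 0) else 1))]
  rw [Finset.prod_eq_single (p k)]
  · simp [rv]
  · rintro ⟨i, w⟩ _ hb
    have : p k ≠ ⟨i, w⟩ := fun h => hb h.symm
    simp only [this, if_false, mul_one]
    exact sum_word (fun k => Pd k i) (fun k => hPd k i) k
  · simp

lemma cbk_marg (hPd : ∀ k i, IsDist (Pd k i)) (p : MsgK N rate)
    (f : (∀ k, Fin N → 𝓧 k) → ℝ) :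
    ∑ c : CbkK 𝓧 N rate, cbkProbK rate Pd c * f (cw c p)
      = ∑ x, PN (fun k => Pd k (rv p k)) x * f x := by
  simp only [← cbk_marg_aux Pd hPd p, Finset.sum_mul]
  rw [Finset.sum_comm]
  refine Finset.sum_congr rfl fun c _ => ?_
  rw [Finset.sum_eq_single (cw c p)]
  · simp
  · intro b _ hb
    simp [Ne.symm hb]
  · simp

lemma cbk_mix (hPd : ∀ k i, IsDist (Pd k i)) (p : MsgK N rate) (H : CbkK 𝓧 N rate → ℝ) :
    ∑ c : CbkK 𝓧 N rate, cbkProbK rate Pd c * H c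
      = ∑ c : CbkK 𝓧 N rate, cbkProbK rate Pd c *
          ∑ d : CbkK 𝓧 N rate, cbkProbK rate Pd d * H (mixC p c d) := by
  have e1 : ∑ c : CbkK 𝓧 N rate, cbkProbK rate Pd c * H c
      = ∑ z : CbkK 𝓧 N rate × CbkK 𝓧 N rate,
        cbkProbK rate Pd z.1 * (cbkProbK rate Pd z.2 * H z.1) := by
    rw [Fintype.sum_prod_type_right]
    simp only [mul_left_comm, ← Finset.mul_sum]
    rw [← Finset.sum_mul, cbk_sum Pd hPd, one_mul]
  rw [e1]
  simp only [Finset.mul_sum]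
  rw [← Fintype.sum_prod_type
    (f := fun z : CbkK 𝓧 N rate × CbkK 𝓧 N rate =>
      cbkProbK rate Pd z.1 * (cbkProbK rate Pd z.2 * H (mixC p z.1 z.2)))]
  symm
  have hinv : Function.Involutive
      (fun z : CbkK 𝓧 N rate × CbkK 𝓧 N rate => (mixC p z.1 z.2, mixC p z.2 z.1)) := by
    rintro ⟨x, x'⟩
    refine Prod.ext ?_ ?_ <;>
    · funext k i w
      by_cases hk : p k = ⟨i, w⟩ <;> simp [mixC, hk]
  refine Fintype.sum_bijective _ hinv.bijective _ _ ?_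
  rintro ⟨x, x'⟩
  simp only
  rw [← mul_assoc, ← mul_assoc]
  congr 1
  simp only [cbkProbK, ← Finset.prod_mul_distrib]
  refine Finset.prod_congr rfl fun k _ => Finset.prod_congr rfl fun i _ =>
    Finset.prod_congr rfl fun w _ => Finset.prod_congr rfl fun j _ => ?_
  by_cases hk : p k = ⟨i, w⟩
  · simp [mixC, hk]
  · simp [mixC, hk, mul_comm]

end codebook


section letters
variable {K M : ℕ} {𝓧 : Fin K → Type*} [∀ k, Fintype (𝓧 k)]
    {𝓨 : Type*} [Fintype 𝓨] {N : ℕ} {rate : Fin K → Fin M → ℝ}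
    (W : (∀ k, 𝓧 k) → 𝓨 → ℝ)

lemma sum_letters (f : Fin N → (∀ k, 𝓧 k) → ℝ) :
    ∑ x : ∀ k, Fin N → 𝓧 k, ∏ j, f j (fun k => x k j) = ∏ j, ∑ u, f j u := by
  rw [Fintype.prod_sum]
  exact Fintype.sum_equiv (Equiv.piComm _) _ _ (fun x => rfl)

/-- Averages of powers of the channel over the inputs outside `S` (single letter). -/
def Av (S : Finset (Fin K)) (Q : ∀ k, 𝓧 k → ℝ) (b : ℝ) (v : ∀ k, 𝓧 k) (y : 𝓨) : ℝ :=
  ∑ u : ∀ k, 𝓧 k, (∏ k, Q k (u k)) * W (mrg S v u) y ^ b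

/-- Averages of powers of the channel over the inputs outside `S` (`N` letters). -/
def AvN (S : Finset (Fin K)) (Q : ∀ k, 𝓧 k → ℝ) (b : ℝ) (x : ∀ k, Fin N → 𝓧 k)
    (y : Fin N → 𝓨) : ℝ :=
  ∑ x' : ∀ k, Fin N → 𝓧 k, PN Q x' * WnK W (mrg S x x') y ^ b

lemma PN_eq (P : ∀ k, 𝓧 k → ℝ) (x : ∀ k, Fin N → 𝓧 k) :
    PN P x = ∏ j, ∏ k, P k (x k j) := Finset.prod_comm

lemma mrg_col (S : Finset (Fin K)) (x x' : ∀ k, Fin N → 𝓧 k) (j : Fin N) :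
    (fun k => mrg S x x' k j) = mrg S (fun k => x k j) (fun k => x' k j) := by
  funext k; by_cases h : k ∈ S <;> simp [mrg, h]

lemma AvN_eq (hW : IsMAC W) (S : Finset (Fin K)) (Q : ∀ k, 𝓧 k → ℝ) (b : ℝ)
    (x : ∀ k, Fin N → 𝓧 k) (y : Fin N → 𝓨) :
    AvN W S Q b x y = ∏ j, Av W S Q b (fun k => x k j) (y j) := by
  unfold AvN Av
  rw [← sum_letters]
  refine Finset.sum_congr rfl fun x' _ => ?_
  rw [PN_eq, WnK, ← Real.finsetProd_rpow _ _ (fun j _ => hW.1 _ _), ← Finset.prod_mul_distrib]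
  refine Finset.prod_congr rfl fun j _ => ?_
  rw [mrg_col]

lemma WnK_nonneg (hW : IsMAC W) (x : ∀ k, Fin N → 𝓧 k) (y : Fin N → 𝓨) : 0 ≤ WnK W x y :=
  Finset.prod_nonneg fun j _ => hW.1 _ _

lemma WnK_sum (hW : IsMAC W) (x : ∀ k, Fin N → 𝓧 k) : ∑ y : Fin N → 𝓨, WnK W x y = 1 := by
  unfold WnK
  rw [← Fintype.prod_sum]
  simp [hW.2]

lemma Av_nonneg (hW : IsMAC W) (S : Finset (Fin K)) (Q : ∀ k, 𝓧 k → ℝ)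
    (hQ : ∀ k, IsDist (Q k)) (b : ℝ) (v : ∀ k, 𝓧 k) (y : 𝓨) : 0 ≤ Av W S Q b v y :=
  Finset.sum_nonneg fun u _ => mul_nonneg (Finset.prod_nonneg fun k _ => (hQ k).1 _)
    (Real.rpow_nonneg (hW.1 _ _) _)

lemma AvN_nonneg (hW : IsMAC W) (S : Finset (Fin K)) (Q : ∀ k, 𝓧 k → ℝ)
    (hQ : ∀ k, IsDist (Q k)) (b : ℝ) (x : ∀ k, Fin N → 𝓧 k) (y : Fin N → 𝓨) :
    0 ≤ AvN W S Q b x y :=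
  Finset.sum_nonneg fun u _ => mul_nonneg (PN_nonneg Q hQ _)
    (Real.rpow_nonneg (WnK_nonneg W hW _ _) _)

lemma AvN_mrg (S : Finset (Fin K)) (Q : ∀ k, 𝓧 k → ℝ) (b : ℝ) (x z : ∀ k, Fin N → 𝓧 k)
    (y : Fin N → 𝓨) : AvN W S Q b (mrg S x z) y = AvN W S Q b x y := by
  simp only [AvN, mrg_mrg_left]

lemma le_AvN (hW : IsMAC W) (S : Finset (Fin K)) (Q : ∀ k, 𝓧 k → ℝ)
    (hQ : ∀ k, IsDist (Q k)) (b : ℝ) (x : ∀ k, Fin N → 𝓧 k) (y : Fin N → 𝓨) :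
    PN Q x * WnK W x y ^ b ≤ AvN W S Q b x y := by
  have := Finset.single_le_sum (f := fun x' => PN Q x' * WnK W (mrg S x x') y ^ b)
    (fun u _ => mul_nonneg (PN_nonneg Q hQ _)
    (Real.rpow_nonneg (WnK_nonneg W hW _ _) _)) (Finset.mem_univ x)
  simp only [mrg_self] at this
  exact this

/-- The common form of the Gallager-type sums. -/
def Gg (S : Finset (Fin K)) (P Q : ∀ k, 𝓧 k → ℝ) (b₁ b₂ α β : ℝ) : ℝ :=
  ∑ y : 𝓨, ∑ v : ∀ k, 𝓧 k, (∏ k, P k (v k)) * (Av W S P b₁ v y ^ α * Av W S Q b₂ v y ^ β)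

lemma Gg_pow (hW : IsMAC W) (S : Finset (Fin K)) (P Q : ∀ k, 𝓧 k → ℝ)
    (hP : ∀ k, IsDist (P k)) (hQ : ∀ k, IsDist (Q k)) (b₁ b₂ α β : ℝ) :
    ∑ y : Fin N → 𝓨, ∑ x : ∀ k, Fin N → 𝓧 k,
      PN P x * (AvN W S P b₁ x y ^ α * AvN W S Q b₂ x y ^ β)
      = Gg W S P Q b₁ b₂ α β ^ N := by
  unfold Gg
  have hpow : ∀ a : ℝ, a ^ N = ∏ _j : Fin N, a := fun a => by simp
  rw [hpow, Fintype.prod_sum]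
  refine Finset.sum_congr rfl fun y _ => ?_
  rw [← sum_letters (f := fun j v => (∏ k, P k (v k)) *
    (Av W S P b₁ v (y j) ^ α * Av W S Q b₂ v (y j) ^ β))]
  refine Finset.sum_congr rfl fun x _ => ?_
  rw [PN_eq, AvN_eq W hW, AvN_eq W hW,
    ← Real.finsetProd_rpow _ _ (fun j _ => Av_nonneg W hW S P hP _ _ _),
    ← Real.finsetProd_rpow _ _ (fun j _ => Av_nonneg W hW S Q hQ _ _ _),
    ← Finset.prod_mul_distrib, ← Finset.prod_mul_distrib]

lemma sum_split (S : Finset (Fin K)) (Q : ∀ k, 𝓧 k → ℝ) (g : (∀ k, 𝓧 k) → ℝ) :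
    ∑ u : ∀ k, 𝓧 k, (∏ k, Q k (u k)) * g u
      = ∑ a : ∀ k : {k : Fin K // k ∈ S}, 𝓧 k.1, (∏ k, Q k.1 (a k)) *
        ∑ b : ∀ k : {k : Fin K // k ∉ S}, 𝓧 k.1, (∏ k, Q k.1 (b k)) * g (mergeS S a b) := by
  simp only [Finset.mul_sum]
  rw [← Fintype.sum_prod_type (f := fun z : (∀ k : {k : Fin K // k ∈ S}, 𝓧 k.1) ×
    (∀ k : {k : Fin K // k ∉ S}, 𝓧 k.1) => (∏ k, Q k.1 (z.1 k)) *
      ((∏ k, Q k.1 (z.2 k)) * g (mergeS S z.1 z.2)))]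
  refine Fintype.sum_equiv (Equiv.piEquivPiSubtypeProd (fun k => k ∈ S) 𝓧) _ _ ?_
  intro u
  have h1 : mergeS S (Equiv.piEquivPiSubtypeProd (fun k => k ∈ S) 𝓧 u).1
      (Equiv.piEquivPiSubtypeProd (fun k => k ∈ S) 𝓧 u).2 = u := by
    funext k; by_cases h : k ∈ S <;> simp [mergeS, h]
  rw [h1, ← mul_assoc]
  congr 1
  rw [← Fintype.prod_subtype_mul_prod_subtype (fun k => k ∈ S) (fun k => Q k (u k))]
  refine congrArg₂ _ ?_ rfl
  exact Finset.prod_congr (by ext; simp) (fun _ _ => rfl)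

lemma sum_sub_dist1 (S : Finset (Fin K)) (Q : ∀ k, 𝓧 k → ℝ)
    (hQ : ∀ k, IsDist (Q k)) :
    ∑ a : ∀ k : {k : Fin K // k ∈ S}, 𝓧 k.1, ∏ k, Q k.1 (a k) = 1 := by
  rw [← Fintype.prod_sum (f := fun (k : {k : Fin K // k ∈ S}) (v : 𝓧 k.1) => Q k.1 v)]
  exact Finset.prod_eq_one fun k _ => (hQ k.1).2

lemma sum_sub_dist2 (S : Finset (Fin K)) (Q : ∀ k, 𝓧 k → ℝ)
    (hQ : ∀ k, IsDist (Q k)) :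
    ∑ a : ∀ k : {k : Fin K // k ∉ S}, 𝓧 k.1, ∏ k, Q k.1 (a k) = 1 := by
  rw [← Fintype.prod_sum (f := fun (k : {k : Fin K // k ∉ S}) (v : 𝓧 k.1) => Q k.1 v)]
  exact Finset.prod_eq_one fun k _ => (hQ k.1).2

lemma Av_merge (S : Finset (Fin K)) (Q : ∀ k, 𝓧 k → ℝ)
    (hQ : ∀ k, IsDist (Q k)) (c : ℝ) (a : ∀ k : {k : Fin K // k ∈ S}, 𝓧 k.1)
    (b : ∀ k : {k : Fin K // k ∉ S}, 𝓧 k.1) (y : 𝓨) :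
    Av W S Q c (mergeS S a b) y
      = ∑ xb : ∀ k : {k : Fin K // k ∉ S}, 𝓧 k.1,
          (∏ k, Q k.1 (xb k)) * W (mergeS S a xb) y ^ c := by
  unfold Av
  rw [sum_split S Q (fun u => W (mrg S (mergeS S a b) u) y ^ c)]
  have : ∀ a' b', mrg S (mergeS S a b) (mergeS S a' b') = mergeS S a b' := by
    intro a' b'
    funext k; by_cases h : k ∈ S <;> simp [mergeS, mrg, h]
  simp only [this]
  rw [← Finset.sum_mul, sum_sub_dist1 _ Q hQ, one_mul]

lemma GmK_eq (S : Finset (Fin K)) (P Q : ∀ k, 𝓧 k → ℝ)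
    (hP : ∀ k, IsDist (P k)) (hQ : ∀ k, IsDist (Q k)) (ρ s : ℝ) :
    GmK W S P Q ρ s = Gg W S P Q (1 - s) (s / ρ) 1 ρ := by
  unfold GmK Gg
  refine Finset.sum_congr rfl fun y _ => ?_
  rw [sum_split S P (fun v => Av W S P (1 - s) v y ^ (1:ℝ) * Av W S Q (s / ρ) v y ^ ρ)]
  simp only [Av_merge W S P hP, Av_merge W S Q hQ, Real.rpow_one]
  refine Finset.sum_congr rfl fun xs _ => ?_
  rw [← Finset.sum_mul, sum_sub_dist2 _ P hP, one_mul]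

lemma GiK_eq (S : Finset (Fin K)) (P Q : ∀ k, 𝓧 k → ℝ)
    (hP : ∀ k, IsDist (P k)) (hQ : ∀ k, IsDist (Q k)) (ρ s : ℝ) :
    GiK W S P Q ρ s = Gg W S P Q (s / (s + ρ)) 1 (s + ρ) (1 - s) := by
  unfold GiK Gg
  refine Finset.sum_congr rfl fun y _ => ?_
  rw [sum_split S P (fun v => Av W S P (s / (s + ρ)) v y ^ (s + ρ) * Av W S Q 1 v y ^ (1 - s))]
  simp only [Av_merge W S P hP, Av_merge W S Q hQ, Real.rpow_one]
  refine Finset.sum_congr rfl fun xs _ => ?_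
  rw [← Finset.sum_mul, sum_sub_dist2 _ P hP, one_mul]

/-! ### Error events -/

variable (Pd : ∀ k, Fin M → 𝓧 k → ℝ)

lemma prTx_own (hPd : ∀ k i, IsDist (Pd k i)) (p : MsgK N rate)
    (B : (∀ k, Fin N → 𝓧 k) → (Fin N → 𝓨) → Prop) :
    prTxK W rate Pd p (fun c y => B (cw c p) y)
      = ∑ y : Fin N → 𝓨, ∑ x : ∀ k, Fin N → 𝓧 k,
        PN (fun k => Pd k (rv p k)) x * (WnK W x y * if B x y then 1 else 0) := by
  unfold prTxK
  rw [Finset.sum_comm]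
  refine Finset.sum_congr rfl fun y _ => ?_
  rw [← cbk_marg Pd hPd p (fun x => WnK W x y * if B x y then 1 else 0)]
  simp only [mul_assoc]

lemma le_rpow_of_le_min {g u ρ : ℝ} (hg : g ≤ 1) (hgu : g ≤ u) (hu : 0 ≤ u) (h0 : 0 ≤ ρ)
    (h1 : ρ ≤ 1) : g ≤ u ^ ρ := by
  rcases le_total 1 u with h | h
  · exact hg.trans (Real.one_le_rpow h h0)
  · refine hgu.trans ?_
    simpa using Real.rpow_le_rpow_of_exponent_ge' hu h h0 h1

lemma card_agr (hrate : ∀ k i, 0 ≤ rate k i) (p : MsgK N rate) (S : Finset (Fin K))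
    (r' : Fin K → Fin M) :
    (((Finset.univ.filter fun p' : MsgK N rate => agr p p' = S ∧ rv p' = r').card : ℕ) : ℝ)
      ≤ Real.exp (N * ∑ k ∈ Sᶜ, rate k (r' k)) := by
  let t : ∀ k, Finset ((i : Fin M) × Fin (numMsgK N rate k i)) := fun k =>
    if k ∈ S then {p k} else Finset.univ.image (Sigma.mk (r' k))
  have hsub : (Finset.univ.filter fun p' : MsgK N rate => agr p p' = S ∧ rv p' = r')
      ⊆ Fintype.piFinset t := by
    intro p' hp'
    simp only [Finset.mem_filter, Finset.mem_univ, true_and] at hp'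
    obtain ⟨hS, hr⟩ := hp'
    rw [Fintype.mem_piFinset]
    intro k
    by_cases hk : k ∈ S
    · have : k ∈ agr p p' := hS ▸ hk
      simp only [agr, Finset.mem_filter, Finset.mem_univ, true_and] at this
      simp [t, hk, this]
    · simp only [t, hk, if_false, Finset.mem_image, Finset.mem_univ, true_and]
      have : (p' k).1 = r' k := congrFun hr k
      rw [← this]
      exact ⟨(p' k).2, rfl⟩
  have h1 := Finset.card_le_card hsub
  rw [Fintype.card_piFinset] at h1
  have h2 : ((∏ k, (t k).card : ℕ) : ℝ) ≤ ∏ k, (if k ∈ S then 1 else Real.exp (N * rate k (r' k))) := by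
    push_cast
    refine Finset.prod_le_prod (fun _ _ => by positivity) fun k _ => ?_
    by_cases hk : k ∈ S
    · simp [t, hk]
    · simp only [t, hk, if_false]
      have : (Finset.univ.image (Sigma.mk (β := fun i => Fin (numMsgK N rate k i)) (r' k))).card
          ≤ numMsgK N rate k (r' k) := by
        refine Finset.card_image_le.trans ?_
        simp
      calc _ ≤ ((numMsgK N rate k (r' k) : ℕ) : ℝ) := by exact_mod_cast this
        _ ≤ _ := Nat.floor_le (Real.exp_pos _).le
  calc _ ≤ ((∏ k, (t k).card : ℕ) : ℝ) := by exact_mod_cast h1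
    _ ≤ _ := h2
    _ = _ := by
      rw [Finset.mul_sum, Real.exp_sum, Finset.prod_ite, Finset.prod_const_one, one_mul]
      congr 1
      ext k; simp

lemma prTx_union (hW : IsMAC W) (hrate : ∀ k i, 0 ≤ rate k i)
    (hPd : ∀ k i, IsDist (Pd k i)) (p : MsgK N rate) (S : Finset (Fin K)) (r' : Fin K → Fin M)
    (T : (∀ k, Fin N → 𝓧 k) → (∀ k, Fin N → 𝓧 k) → (Fin N → 𝓨) → Prop)
    (θ : (∀ k, Fin N → 𝓧 k) → (∀ k, Fin N → 𝓧 k) → (Fin N → 𝓨) → ℝ)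
    (hθ : ∀ x z y, 0 ≤ θ x z y)
    (hT : ∀ x z y, PN (fun k => Pd k (rv p k)) x * WnK W x y ≠ 0 → T x (mrg S x z) y → 1 ≤ θ x z y)
    (ρ : ℝ) (h0 : 0 ≤ ρ) (h1 : ρ ≤ 1) :
    prTxK W rate Pd p (fun c y => ∃ p', (agr p p' = S ∧ rv p' = r') ∧ T (cw c p) (cw c p') y)
      ≤ ∑ y : Fin N → 𝓨, ∑ x : ∀ k, Fin N → 𝓧 k, PN (fun k => Pd k (rv p k)) x * (WnK W x y *
        (Real.exp (N * ∑ k ∈ Sᶜ, rate k (r' k)) *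
          ∑ z : ∀ k, Fin N → 𝓧 k, PN (fun k => Pd k (r' k)) z * θ x z y) ^ ρ) := by
  unfold prTxK
  rw [Finset.sum_comm]
  refine Finset.sum_le_sum fun y _ => ?_
  let A := Finset.univ.filter fun p' : MsgK N rate => agr p p' = S ∧ rv p' = r'
  let g : (∀ k, Fin N → 𝓧 k) → ℝ := fun x => ∑ d : CbkK 𝓧 N rate, cbkProbK rate Pd d *
    (if ∃ p', (agr p p' = S ∧ rv p' = r') ∧ T x (mrg S x (cw d p')) y then 1 else 0)
  have e1 : ∑ c : CbkK 𝓧 N rate, cbkProbK rate Pd c * WnK W (cw c p) y *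
      (if ∃ p', (agr p p' = S ∧ rv p' = r') ∧ T (cw c p) (cw c p') y then (1:ℝ) else 0)
      = ∑ x, PN (fun k => Pd k (rv p k)) x * (WnK W x y * g x) := by
    rw [← cbk_marg Pd hPd p (fun x => WnK W x y * g x)]
    simp only [mul_assoc]
    rw [cbk_mix Pd hPd p]
    refine Finset.sum_congr rfl fun c _ => ?_
    congr 1
    simp only [g]
    rw [Finset.mul_sum]
    refine Finset.sum_congr rfl fun d _ => ?_
    rw [cw_mixC_self, mul_left_comm]
    congr 3
    refine propext (exists_congr fun p' => and_congr_right fun h => ?_)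
    rw [cw_mixC, h.1]
  refine le_trans (le_of_eq (Eq.trans ?_ e1)) ?_
  · refine Finset.sum_congr rfl fun c _ => ?_
    congr
  refine Finset.sum_le_sum fun x _ => ?_
  have hPx := PN_nonneg (fun k => Pd k (rv p k)) (fun k => hPd k _) x
  have hWx := WnK_nonneg W hW x y
  by_cases hz : PN (fun k => Pd k (rv p k)) x * WnK W x y = 0
  · rw [← mul_assoc, ← mul_assoc, hz]; simp
  refine mul_le_mul_of_nonneg_left (mul_le_mul_of_nonneg_left ?_ hWx) hPx
  have hΘ : 0 ≤ ∑ z : ∀ k, Fin N → 𝓧 k, PN (fun k => Pd k (r' k)) z * θ x z y :=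
    Finset.sum_nonneg fun z _ => mul_nonneg (PN_nonneg _ (fun k => hPd k _) z) (hθ _ _ _)
  refine le_rpow_of_le_min ?_ ?_ (mul_nonneg (Real.exp_pos _).le hΘ) h0 h1
  · calc g x ≤ ∑ d : CbkK 𝓧 N rate, cbkProbK rate Pd d := by
          refine Finset.sum_le_sum fun d _ => mul_le_of_le_one_right (cbk_nonneg Pd hPd d) ?_
          split_ifs <;> norm_num
      _ = 1 := cbk_sum Pd hPd
  · calc g x ≤ ∑ d : CbkK 𝓧 N rate, cbkProbK rate Pd d * ∑ p' ∈ A, θ x (cw d p') y := by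
          refine Finset.sum_le_sum fun d _ => mul_le_mul_of_nonneg_left ?_ (cbk_nonneg Pd hPd d)
          have hnn : ∀ p' ∈ A, 0 ≤ θ x (cw d p') y := fun p' _ => hθ _ _ _
          split_ifs with hE
          · obtain ⟨p', hp', hTT⟩ := hE
            have hmem : p' ∈ A := by simp [A, hp']
            exact (hT x _ y hz hTT).trans
              (Finset.single_le_sum (f := fun p' => θ x (cw d p') y) hnn hmem)
          · exact Finset.sum_nonneg hnn
      _ = ∑ p' ∈ A, ∑ z, PN (fun k => Pd k (r' k)) z * θ x z y := by
          simp only [Finset.mul_sum]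
          rw [Finset.sum_comm]
          refine Finset.sum_congr rfl fun p' hp' => ?_
          rw [cbk_marg Pd hPd p' (fun z => θ x z y)]
          have : rv p' = r' := by
            simp only [A, Finset.mem_filter] at hp'
            exact hp'.2.2
          rw [this]
      _ = (A.card : ℝ) * ∑ z, PN (fun k => Pd k (r' k)) z * θ x z y := by
          rw [Finset.sum_const, nsmul_eq_mul]
      _ ≤ _ := mul_le_mul_of_nonneg_right (card_agr hrate p S r') hΘ

lemma final_bound {m R ρ G E' : ℝ} (hm : m = Real.exp (N * R)) (hG : 0 ≤ G)
    (h : E' < -ρ * R - Real.log G) : m ^ ρ * G ^ N ≤ Real.exp (-(N * E')) := by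
  rcases hG.eq_or_lt with h0 | h0
  · rcases Nat.eq_zero_or_pos N with hN | hN
    · subst hN; simp [hm]
    · rw [← h0, zero_pow hN.ne', mul_zero]; positivity
  · rw [hm, ← Real.exp_mul]
    nth_rewrite 1 [← Real.exp_log h0]
    rw [← Real.exp_nat_mul, ← Real.exp_add, Real.exp_le_exp]
    have := mul_le_mul_of_nonneg_left h.le (Nat.cast_nonneg (α := ℝ) N)
    nlinarith

lemma Gg_nonneg (hW : IsMAC W) (S : Finset (Fin K)) (P Q : ∀ k, 𝓧 k → ℝ)
    (hP : ∀ k, IsDist (P k)) (hQ : ∀ k, IsDist (Q k)) (b₁ b₂ α β : ℝ) :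
    0 ≤ Gg W S P Q b₁ b₂ α β :=
  Finset.sum_nonneg fun y _ => Finset.sum_nonneg fun v _ =>
    mul_nonneg (Finset.prod_nonneg fun k _ => (hP k).1 _)
      (mul_nonneg (Real.rpow_nonneg (Av_nonneg W hW S P hP _ _ _) _)
        (Real.rpow_nonneg (Av_nonneg W hW S Q hQ _ _ _) _))

lemma em_bound (hW : IsMAC W) (hrate : ∀ k i, 0 ≤ rate k i)
    (hPd : ∀ k i, IsDist (Pd k i)) (S : Finset (Fin K)) (r rt : Fin K → Fin M)
    (E' : ℝ) (hE : E' < EmK W S (∑ k ∈ Sᶜ, rate k (rt k))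
                  (fun k => Pd k (r k)) (fun k => Pd k (rt k)))
    (p : MsgK N rate) (hp : rv p = r) :
    prTxK W rate Pd p (fun c y => ∃ p', (agr p p' = S ∧ rv p' = rt) ∧
      WnK W (cw c p) y ≤ WnK W (cw c p') y) ≤ Real.exp (-(N * E')) := by
  subst hp
  obtain ⟨_, ⟨ρ, ⟨hρ0, hρ1⟩, rfl⟩, hE⟩ := exists_lt_of_lt_csSup
    (Set.Nonempty.image _ ⟨1, by norm_num⟩) hE
  obtain ⟨_, ⟨s, ⟨hs0, hs1⟩, rfl⟩, hE⟩ := exists_lt_of_lt_csSup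
    (Set.Nonempty.image _ ⟨1, by norm_num⟩) (sub_lt_iff_lt_add'.mpr hE)
  simp only at hE
  set P : ∀ k, 𝓧 k → ℝ := fun k => Pd k (rv p k) with hPdef
  set Q : ∀ k, 𝓧 k → ℝ := fun k => Pd k (rt k) with hQdef
  have hP : ∀ k, IsDist (P k) := fun k => hPd k _
  have hQ : ∀ k, IsDist (Q k) := fun k => hPd k _
  set m := Real.exp (N * ∑ k ∈ Sᶜ, rate k (rt k)) with hm
  have hm0 : 0 < m := Real.exp_pos _
  have hU := prTx_union W Pd hW hrate hPd p S rt (fun x z y => WnK W x y ≤ WnK W z y)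
    (fun x z y => (WnK W (mrg S x z) y / WnK W x y) ^ (s / ρ))
    (fun x z y => Real.rpow_nonneg (div_nonneg (WnK_nonneg W hW _ _) (WnK_nonneg W hW _ _)) _)
    (by
      intro x z y hne hle
      have hpos : 0 < WnK W x y := lt_of_le_of_ne (WnK_nonneg W hW _ _)
        (Ne.symm (right_ne_zero_of_mul hne))
      exact Real.one_le_rpow ((one_le_div hpos).mpr hle) (by positivity)) ρ hρ0.le hρ1
  refine hU.trans ?_
  have hfin := final_bound (N := N) (E' := E') (ρ := ρ) hm
    (Gg_nonneg W hW S P Q hP hQ (1 - s) (s / ρ) 1 ρ) (by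
      rw [← GmK_eq W S P Q hP hQ]; linarith)
  refine le_trans ?_ hfin
  rw [← Gg_pow W hW S P Q hP hQ]
  conv_rhs => rw [Finset.mul_sum]
  refine Finset.sum_le_sum fun y _ => ?_
  have e2 := sum_PN_mrg (N := N) S P P hP (fun _ _ => rfl)
    (fun x => WnK W x y ^ (1 - s) * AvN W S Q (s / ρ) x y ^ ρ)
  have e3 : ∑ x : ∀ k, Fin N → 𝓧 k, PN P x * (AvN W S P (1 - s) x y ^ (1:ℝ) * AvN W S Q (s / ρ) x y ^ ρ)
      = ∑ x : ∀ k, Fin N → 𝓧 k, PN P x * (WnK W x y ^ (1 - s) * AvN W S Q (s / ρ) x y ^ ρ) := by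
    rw [← e2]
    refine Finset.sum_congr rfl fun x _ => ?_
    simp only [AvN_mrg, ← mul_assoc]
    rw [← Finset.sum_mul, Real.rpow_one, mul_assoc]
    rfl
  rw [e3]
  conv_rhs => rw [Finset.mul_sum]
  refine Finset.sum_le_sum fun x _ => ?_
  conv_rhs => rw [mul_left_comm]
  refine mul_le_mul_of_nonneg_left ?_ (PN_nonneg P hP x)
  have hAv := AvN_nonneg W hW S Q hQ (s / ρ) x y
  rcases (WnK_nonneg W hW x y).eq_or_lt with h0 | h0
  · rw [← h0, zero_mul]
    exact mul_nonneg (Real.rpow_nonneg hm0.le _)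
      (mul_nonneg (Real.rpow_nonneg le_rfl _) (Real.rpow_nonneg hAv _))
  · refine le_of_eq ?_
    have e4 : ∑ z : ∀ k, Fin N → 𝓧 k, PN Q z * (WnK W (mrg S x z) y / WnK W x y) ^ (s / ρ)
        = AvN W S Q (s / ρ) x y * (WnK W x y ^ (s / ρ))⁻¹ := by
      rw [AvN, Finset.sum_mul]
      refine Finset.sum_congr rfl fun z _ => ?_
      rw [Real.div_rpow (WnK_nonneg W hW _ _) h0.le, div_eq_mul_inv, mul_assoc]
    rw [e4, Real.mul_rpow hm0.le (by positivity), Real.mul_rpow hAv (by positivity),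
      Real.inv_rpow (by positivity), ← Real.rpow_mul h0.le, div_mul_cancel₀ _ hρ0.ne',
      Real.rpow_sub h0, Real.rpow_one]
    field_simp

end letters


section tests
variable {K M : ℕ} {𝓧 : Fin K → Type*} [∀ k, Fintype (𝓧 k)]
    {𝓨 : Type*} [Fintype 𝓨] {N : ℕ} {rate : Fin K → Fin M → ℝ}
    (W : (∀ k, 𝓧 k) → 𝓨 → ℝ)

lemma sum_avg (S : Finset (Fin K)) (P Q : ∀ k, 𝓧 k → ℝ) (hP : ∀ k, IsDist (P k))
    (hPQ : ∀ k ∈ S, P k = Q k) (b : ℝ) (y : Fin N → 𝓨) (h : (∀ k, Fin N → 𝓧 k) → ℝ)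
    (hh : ∀ x z, h (mrg S x z) = h x) :
    ∑ x : ∀ k, Fin N → 𝓧 k, PN Q x * (WnK W x y ^ b * h x)
      = ∑ x : ∀ k, Fin N → 𝓧 k, PN P x * (AvN W S Q b x y * h x) := by
  rw [← sum_PN_mrg S P Q hP hPQ]
  refine Finset.sum_congr rfl fun x _ => ?_
  simp only [hh, ← mul_assoc]
  rw [← Finset.sum_mul, mul_assoc]
  rfl

/-- The decision threshold. -/
def thr (m V F ρ s : ℝ) : ℝ :=
  (m ^ (ρ / (1 - s)) * V * F ^ (ρ / (1 - s) - 1)) ^ ((s + ρ) * (1 - s) / ρ)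

lemma thr_pos {m V F ρ s : ℝ} (hm : 0 < m) (hV : 0 < V) (hF : 0 < F) : 0 < thr m V F ρ s := by
  unfold thr; positivity

lemma thr_id1 {m V F ρ s : ℝ} (hm : 0 < m) (hV : 0 < V) (hF : 0 < F) (hρ : 0 < ρ) (hs : 0 < s)
    (hs1 : s < 1) :
    F * thr m V F ρ s ^ (ρ / (s + ρ)) = m ^ ρ * (F ^ (s + ρ) * V ^ (1 - s)) := by
  obtain ⟨m, rfl⟩ : ∃ t, m = Real.exp t := ⟨_, (Real.exp_log hm).symm⟩
  obtain ⟨V, rfl⟩ : ∃ t, V = Real.exp t := ⟨_, (Real.exp_log hV).symm⟩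
  obtain ⟨F, rfl⟩ : ∃ t, F = Real.exp t := ⟨_, (Real.exp_log hF).symm⟩
  have h1 : 1 - s ≠ 0 := by linarith
  have h2 : s + ρ ≠ 0 := by linarith
  simp only [thr, ← Real.exp_mul, ← Real.exp_add]
  congr 1
  field_simp
  ring

lemma thr_id2 {m V F ρ s : ℝ} (hm : 0 < m) (hV : 0 < V) (hF : 0 < F) (hρ : 0 < ρ) (hs : 0 < s)
    (hs1 : s < 1) :
    V * (m * (F * (thr m V F ρ s ^ (s / (s + ρ)))⁻¹)) ^ (ρ / (1 - s))
      = m ^ ρ * (F ^ (s + ρ) * V ^ (1 - s)) := by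
  obtain ⟨m, rfl⟩ : ∃ t, m = Real.exp t := ⟨_, (Real.exp_log hm).symm⟩
  obtain ⟨V, rfl⟩ : ∃ t, V = Real.exp t := ⟨_, (Real.exp_log hV).symm⟩
  obtain ⟨F, rfl⟩ : ∃ t, F = Real.exp t := ⟨_, (Real.exp_log hF).symm⟩
  have h1 : 1 - s ≠ 0 := by linarith
  have h2 : s + ρ ≠ 0 := by linarith
  simp only [thr, ← Real.exp_mul, ← Real.exp_add, ← Real.exp_neg]
  congr 1
  field_simp
  ring

variable (Pd : ∀ k, Fin M → 𝓧 k → ℝ)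

lemma ei_params {S : Finset (Fin K)} {R E' : ℝ} {P Q : ∀ k, 𝓧 k → ℝ}
    (hE : E' < EiK W S R P Q) :
    ∃ ρ s, 0 < ρ ∧ ρ < 1 ∧ 0 < s ∧ s ≤ 1 - ρ ∧ E' < -ρ * R - Real.log (GiK W S P Q ρ s) := by
  obtain ⟨_, ⟨ρ, ⟨hρ0, hρ1⟩, rfl⟩, hE⟩ := exists_lt_of_lt_csSup
    (Set.Nonempty.image _ ⟨1/2, by norm_num⟩) hE
  obtain ⟨_, ⟨s, ⟨hs0, hs1⟩, rfl⟩, hE⟩ := exists_lt_of_lt_csSup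
    (Set.Nonempty.image _ ⟨1 - ρ, by simpa using hρ1⟩) hE
  exact ⟨ρ, s, hρ0, hρ1, hs0, hs1, hE⟩

lemma ei_bound (hW : IsMAC W) (hrate : ∀ k i, 0 ≤ rate k i)
    (hPd : ∀ k i, IsDist (Pd k i)) (S : Finset (Fin K)) (r rt : Fin K → Fin M)
    (hS : ∀ k ∈ S, r k = rt k)
    (E' : ℝ) (hE : E' < EiK W S (∑ k ∈ Sᶜ, rate k (r k))
                  (fun k => Pd k (r k)) (fun k => Pd k (rt k))) :
    ∃ T : (∀ k, Fin N → 𝓧 k) → (Fin N → 𝓨) → Prop,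
      (∀ p : MsgK N rate, rv p = r →
        prTxK W rate Pd p (fun c y => ¬ T (cw c p) y) ≤ Real.exp (-(N * E'))) ∧
      (∀ p : MsgK N rate, rv p = rt →
        prTxK W rate Pd p (fun c y => ∃ p', (agr p p' = S ∧ rv p' = r) ∧ T (cw c p') y)
          ≤ Real.exp (-(N * E'))) := by
  obtain ⟨ρ, s, hρ0, hρ1, hs0, hsρ, hE⟩ := ei_params W hE
  have hs1 : s < 1 := by linarith
  set P : ∀ k, 𝓧 k → ℝ := fun k => Pd k (r k) with hPdef
  set Q : ∀ k, 𝓧 k → ℝ := fun k => Pd k (rt k) with hQdef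
  have hP : ∀ k, IsDist (P k) := fun k => hPd k _
  have hQ : ∀ k, IsDist (Q k) := fun k => hPd k _
  have hPQ : ∀ k ∈ S, P k = Q k := fun k hk => by simp only [hPdef, hQdef, hS k hk]
  set m := Real.exp (N * ∑ k ∈ Sᶜ, rate k (r k)) with hm
  have hm0 : 0 < m := Real.exp_pos _
  set b := s / (s + ρ) with hb
  set a := ρ / (s + ρ) with ha
  have hb0 : 0 < b := by positivity
  have ha0 : 0 < a := by positivity
  have hab : b + a = 1 := by rw [hb, ha]; field_simp
  set F : (∀ k, Fin N → 𝓧 k) → (Fin N → 𝓨) → ℝ := fun x y => AvN W S P b x y with hF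
  set V : (∀ k, Fin N → 𝓧 k) → (Fin N → 𝓨) → ℝ := fun x y => AvN W S Q 1 x y with hV
  have hF0 : ∀ x y, 0 ≤ F x y := fun x y => AvN_nonneg W hW S P hP b x y
  have hV0 : ∀ x y, 0 ≤ V x y := fun x y => AvN_nonneg W hW S Q hQ 1 x y
  have hFm : ∀ x z y, F (mrg S x z) y = F x y := fun x z y => AvN_mrg W S P b x z y
  have hVm : ∀ x z y, V (mrg S x z) y = V x y := fun x z y => AvN_mrg W S Q 1 x z y
  set τ : (∀ k, Fin N → 𝓧 k) → (Fin N → 𝓨) → ℝ := fun x y => thr m (V x y) (F x y) ρ s with hτ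
  have hτm : ∀ x z y, τ (mrg S x z) y = τ x y := fun x z y => by simp only [hτ, hFm, hVm]
  have hfin := final_bound (N := N) (E' := E') (ρ := ρ) hm
    (Gg_nonneg W hW S P Q hP hQ b 1 (s + ρ) (1 - s)) (by
      rw [← GiK_eq W S P Q hP hQ]; linarith)
  rw [← Gg_pow W hW S P Q hP hQ] at hfin
  have hterm : ∀ x y, 0 ≤ m ^ ρ * (F x y ^ (s + ρ) * V x y ^ (1 - s)) := fun x y =>
    mul_nonneg (Real.rpow_nonneg hm0.le _) (mul_nonneg (Real.rpow_nonneg (hF0 x y) _)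
      (Real.rpow_nonneg (hV0 x y) _))
  refine ⟨fun x y => V x y = 0 ∨ (F x y ≠ 0 ∧ τ x y < WnK W x y), ?_, ?_⟩
  · rintro p rfl
    rw [prTx_own W Pd hPd p (fun x y => ¬ (V x y = 0 ∨ (F x y ≠ 0 ∧ τ x y < WnK W x y)))]
    refine le_trans ?_ hfin
    conv_rhs => rw [Finset.mul_sum]
    refine Finset.sum_le_sum fun y _ => ?_
    let h : (∀ k, Fin N → 𝓧 k) → ℝ := fun x => if V x y = 0 ∨ F x y = 0 then 0 else τ x y ^ a
    have hh : ∀ x z, h (mrg S x z) = h x := fun x z => by simp only [h, hVm, hFm, hτm]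
    have hh0 : ∀ x, 0 ≤ h x := by
      intro x
      simp only [h]
      split_ifs with h1
      · exact le_rfl
      · push Not at h1
        exact Real.rpow_nonneg (thr_pos hm0 ((hV0 x y).lt_of_ne' h1.1)
          ((hF0 x y).lt_of_ne' h1.2)).le _
    calc _ ≤ ∑ x : ∀ k, Fin N → 𝓧 k, PN P x * (WnK W x y ^ b * h x) := by
          refine Finset.sum_le_sum fun x _ => ?_
          have hPx := PN_nonneg P hP x
          have hWx := WnK_nonneg W hW x y
          have hrhs : 0 ≤ PN P x * (WnK W x y ^ b * h x) :=
            mul_nonneg hPx (mul_nonneg (Real.rpow_nonneg hWx _) (hh0 x))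
          split_ifs with hc
          · simp only [mul_zero]; exact hrhs
          · push Not at hc
            obtain ⟨hVne, himp⟩ := hc
            by_cases hFz : F x y = 0
            · have h1 := le_AvN W hW S P hP b x y
              have h2 : AvN W S P b x y = 0 := hFz
              rw [h2] at h1
              have h3 : PN P x * WnK W x y ^ b = 0 :=
                le_antisymm h1 (mul_nonneg hPx (Real.rpow_nonneg hWx _))
              have h4 : PN P x * WnK W x y = 0 := by
                rcases mul_eq_zero.mp h3 with h5 | h5
                · rw [h5, zero_mul]
                · rw [(Real.rpow_eq_zero hWx hb0.ne').mp h5, mul_zero]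
              have h5 : PN P x * (WnK W x y * 1) = 0 := by rw [mul_one, h4]
              exact h5.le.trans hrhs
            · have hle := himp hFz
              have h6 : h x = τ x y ^ a := by simp only [h, hVne, hFz, or_self, if_false]
              rw [h6]
              refine mul_le_mul_of_nonneg_left ?_ hPx
              calc WnK W x y * 1 = WnK W x y ^ (b + a) := by rw [hab, Real.rpow_one, mul_one]
                _ = WnK W x y ^ b * WnK W x y ^ a := Real.rpow_add_of_nonneg hWx hb0.le ha0.le
                _ ≤ _ := mul_le_mul_of_nonneg_left (Real.rpow_le_rpow hWx hle ha0.le)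
                  (Real.rpow_nonneg hWx _)
      _ = ∑ x : ∀ k, Fin N → 𝓧 k, PN P x * (F x y * h x) :=
          sum_avg W S P P hP (fun _ _ => rfl) b y h hh
      _ ≤ ∑ x : ∀ k, Fin N → 𝓧 k, PN P x * (m ^ ρ * (F x y ^ (s + ρ) * V x y ^ (1 - s))) := by
          refine Finset.sum_le_sum fun x _ => mul_le_mul_of_nonneg_left ?_ (PN_nonneg P hP x)
          simp only [h]
          split_ifs with h1
          · rw [mul_zero]; exact hterm x y
          · push Not at h1
            exact (thr_id1 hm0 ((hV0 x y).lt_of_ne' h1.1) ((hF0 x y).lt_of_ne' h1.2)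
              hρ0 hs0 hs1).le
      _ = _ := by
          rw [Finset.mul_sum]
          exact Finset.sum_congr rfl fun x _ => mul_left_comm _ _ _
  · rintro p hp
    have hρ' : ρ / (1 - s) ≤ 1 := by rw [div_le_one (by linarith)]; linarith
    have hρ'0 : 0 < ρ / (1 - s) := div_pos hρ0 (by linarith)
    have hτ0 : ∀ x y, 0 ≤ τ x y := fun x y => Real.rpow_nonneg
      (mul_nonneg (mul_nonneg (Real.rpow_nonneg hm0.le _) (hV0 x y)) (Real.rpow_nonneg (hF0 x y) _)) _
    have hU := prTx_union W Pd hW hrate hPd p S r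
      (fun x z y => V z y = 0 ∨ (F z y ≠ 0 ∧ τ z y < WnK W z y))
      (fun x z y => (WnK W (mrg S x z) y / τ x y) ^ b)
      (fun x z y => Real.rpow_nonneg (div_nonneg (WnK_nonneg W hW _ _) (hτ0 _ _)) _)
      (by
        intro x z y hne hle
        rw [hp] at hne
        simp only [hVm, hFm, hτm] at hle
        have hVpos : 0 < V x y := by
          have h1 := le_AvN W hW S Q hQ 1 x y
          rw [Real.rpow_one] at h1
          exact lt_of_lt_of_le ((mul_nonneg (PN_nonneg Q hQ x)
            (WnK_nonneg W hW x y)).lt_of_ne' hne) h1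
        obtain ⟨hFne, hlt⟩ := hle.resolve_left hVpos.ne'
        have hτp : 0 < τ x y := thr_pos hm0 hVpos ((hF0 x y).lt_of_ne' hFne)
        exact Real.one_le_rpow ((one_le_div hτp).mpr hlt.le) hb0.le) (ρ / (1 - s)) hρ'0.le hρ'
    refine hU.trans ?_
    rw [hp]
    refine le_trans ?_ hfin
    conv_rhs => rw [Finset.mul_sum]
    refine Finset.sum_le_sum fun y _ => ?_
    let g : (∀ k, Fin N → 𝓧 k) → ℝ := fun x =>
      (m * (F x y * (τ x y ^ b)⁻¹)) ^ (ρ / (1 - s))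
    have hg : ∀ x z, g (mrg S x z) = g x := fun x z => by simp only [g, hFm, hτm]
    calc _ = ∑ x : ∀ k, Fin N → 𝓧 k, PN Q x * (WnK W x y ^ (1:ℝ) * g x) := by
          refine Finset.sum_congr rfl fun x _ => ?_
          have e4 : ∑ z : ∀ k, Fin N → 𝓧 k, PN P z * (WnK W (mrg S x z) y / τ x y) ^ b
              = F x y * (τ x y ^ b)⁻¹ := by
            simp only [hF, AvN]
            rw [Finset.sum_mul]
            refine Finset.sum_congr rfl fun z _ => ?_
            rw [Real.div_rpow (WnK_nonneg W hW _ _) (hτ0 _ _), div_eq_mul_inv, mul_assoc]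
          rw [Real.rpow_one, e4]
      _ = ∑ x : ∀ k, Fin N → 𝓧 k, PN P x * (V x y * g x) :=
          sum_avg W S P Q hP hPQ 1 y g hg
      _ ≤ ∑ x : ∀ k, Fin N → 𝓧 k, PN P x * (m ^ ρ * (F x y ^ (s + ρ) * V x y ^ (1 - s))) := by
          refine Finset.sum_le_sum fun x _ => mul_le_mul_of_nonneg_left ?_ (PN_nonneg P hP x)
          by_cases hVz : V x y = 0
          · have h0 : V x y * g x = 0 := by rw [hVz, zero_mul]
            rw [h0]; exact hterm x y
          by_cases hFz : F x y = 0
          · have : g x = 0 := by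
              simp only [g, hFz, zero_mul, mul_zero]
              exact Real.zero_rpow hρ'0.ne'
            rw [this, mul_zero]; exact hterm x y
          exact (thr_id2 hm0 ((hV0 x y).lt_of_ne' hVz) ((hF0 x y).lt_of_ne' hFz)
              hρ0 hs0 hs1).le
      _ = _ := by
          rw [Finset.mul_sum]
          exact Finset.sum_congr rfl fun x _ => mul_left_comm _ _ _

end tests


section system
variable {K M : ℕ} {𝓧 : Fin K → Type*} [∀ k, Fintype (𝓧 k)]
    {𝓨 : Type*} [Fintype 𝓨] {N : ℕ} {rate : Fin K → Fin M → ℝ}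
    (W : (∀ k, 𝓧 k) → 𝓨 → ℝ) (Pd : ∀ k, Fin M → 𝓧 k → ℝ)

lemma prTx_weight_nonneg (hW : IsMAC W) (hPd : ∀ k i, IsDist (Pd k i)) (p : MsgK N rate)
    (c : CbkK 𝓧 N rate) (y : Fin N → 𝓨) : 0 ≤ cbkProbK rate Pd c * WnK W (cw c p) y :=
  mul_nonneg (cbk_nonneg Pd hPd c) (WnK_nonneg W hW _ _)

lemma prTx_nonneg (hW : IsMAC W) (hPd : ∀ k i, IsDist (Pd k i)) (p : MsgK N rate)
    (E : CbkK 𝓧 N rate → (Fin N → 𝓨) → Prop) : 0 ≤ prTxK W rate Pd p E :=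
  Finset.sum_nonneg fun c _ => Finset.sum_nonneg fun y _ =>
    mul_nonneg (prTx_weight_nonneg W Pd hW hPd p c y) (by split_ifs <;> norm_num)

lemma prTx_le_one (hW : IsMAC W) (hPd : ∀ k i, IsDist (Pd k i)) (p : MsgK N rate)
    (E : CbkK 𝓧 N rate → (Fin N → 𝓨) → Prop) : prTxK W rate Pd p E ≤ 1 := by
  calc prTxK W rate Pd p E ≤ ∑ c : CbkK 𝓧 N rate, ∑ y : Fin N → 𝓨,
        cbkProbK rate Pd c * WnK W (cw c p) y :=
        Finset.sum_le_sum fun c _ => Finset.sum_le_sum fun y _ =>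
          mul_le_of_le_one_right (prTx_weight_nonneg W Pd hW hPd p c y) (by split_ifs <;> norm_num)
    _ = 1 := by
        simp only [← Finset.mul_sum, WnK_sum W hW, mul_one]
        exact cbk_sum Pd hPd

lemma prTx_le_sum (hW : IsMAC W) (hPd : ∀ k i, IsDist (Pd k i)) (p : MsgK N rate)
    {ι : Type*} (I : Finset ι) (E : CbkK 𝓧 N rate → (Fin N → 𝓨) → Prop)
    (F : ι → CbkK 𝓧 N rate → (Fin N → 𝓨) → Prop)
    (h : ∀ c y, E c y → ∃ i ∈ I, F i c y) :
    prTxK W rate Pd p E ≤ ∑ i ∈ I, prTxK W rate Pd p (F i) := by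
  unfold prTxK
  conv_rhs => rw [Finset.sum_comm]
  refine Finset.sum_le_sum fun c _ => ?_
  conv_rhs => rw [Finset.sum_comm]
  refine Finset.sum_le_sum fun y _ => ?_
  rw [← Finset.mul_sum]
  refine mul_le_mul_of_nonneg_left ?_ (prTx_weight_nonneg W Pd hW hPd p c y)
  have hnn : ∀ i ∈ I, (0:ℝ) ≤ if F i c y then 1 else 0 := fun i _ => by split_ifs <;> norm_num
  split_ifs with hE
  · obtain ⟨i, hi, hF⟩ := h c y hE
    have := Finset.single_le_sum hnn hi
    simpa only [hF, if_true] using this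
  · exact Finset.sum_nonneg hnn

lemma prTx_mono (hW : IsMAC W) (hPd : ∀ k i, IsDist (Pd k i)) (p : MsgK N rate)
    (E F : CbkK 𝓧 N rate → (Fin N → 𝓨) → Prop) (h : ∀ c y, E c y → F c y) :
    prTxK W rate Pd p E ≤ prTxK W rate Pd p F := by
  have := prTx_le_sum W Pd hW hPd p (Finset.univ : Finset Unit) E (fun _ => F)
    (fun c y hE => ⟨(), Finset.mem_univ _, h c y hE⟩)
  simpa using this

lemma prTx_false (p : MsgK N rate)
    (E : CbkK 𝓧 N rate → (Fin N → 𝓨) → Prop) (h : ∀ c y, ¬ E c y) :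
    prTxK W rate Pd p E = 0 := by
  simp [prTxK, h]

lemma rv_eq_of_mem_agr {p p' : MsgK N rate} {k : Fin K} (h : k ∈ agr p p') :
    rv p k = rv p' k := by
  simp only [agr, Finset.mem_filter, Finset.mem_univ, true_and] at h
  simp only [rv, h]

lemma agr_ne_univ {p p' : MsgK N rate} (h : p ≠ p') : agr p p' ≠ Finset.univ := by
  intro he
  apply h
  funext k
  have : k ∈ agr p p' := he ▸ Finset.mem_univ k
  simpa only [agr, Finset.mem_filter, Finset.mem_univ, true_and] using this

lemma agr_comm (p p' : MsgK N rate) : agr p p' = agr p' p := by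
  ext k; simp [agr, eq_comm]

lemma achiev (hW : IsMAC W) (hrate : ∀ k i, 0 ≤ rate k i) (hPd : ∀ k i, IsDist (Pd k i))
    (R : Finset (Fin K → Fin M)) (E' : ℝ)
    (hm : ∀ S : Finset (Fin K), S ≠ Finset.univ → ∀ r ∈ R, ∀ rt ∈ R, (∀ k ∈ S, r k = rt k) →
      E' < EmK W S (∑ k ∈ Sᶜ, rate k (rt k)) (fun k => Pd k (r k)) (fun k => Pd k (rt k)))
    (hi : ∀ S : Finset (Fin K), S ≠ Finset.univ → ∀ r ∈ R, ∀ rt ∈ Finset.univ \ R,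
      (∀ k ∈ S, r k = rt k) →
      E' < EiK W S (∑ k ∈ Sᶜ, rate k (r k)) (fun k => Pd k (r k)) (fun k => Pd k (rt k))) :
    ∃ D : CbkK 𝓧 N rate → (Fin N → 𝓨) → Option (MsgK N rate),
      (∀ c y p, D c y = some p → rv p ∈ R) ∧
      PesK W N rate Pd R D ≤
        (Fintype.card (Finset (Fin K) × (Fin K → Fin M)) : ℝ) * Real.exp (-(N * E')) := by
  have hex : ∀ (S : Finset (Fin K)) (r rt : Fin K → Fin M),
      ∃ T : (∀ k, Fin N → 𝓧 k) → (Fin N → 𝓨) → Prop,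
      (S ≠ Finset.univ → r ∈ R → rt ∉ R → (∀ k ∈ S, r k = rt k) →
      (∀ p : MsgK N rate, rv p = r →
        prTxK W rate Pd p (fun c y => ¬ T (cw c p) y) ≤ Real.exp (-(N * E'))) ∧
      (∀ p : MsgK N rate, rv p = rt →
        prTxK W rate Pd p (fun c y => ∃ p', (agr p p' = S ∧ rv p' = r) ∧ T (cw c p') y)
          ≤ Real.exp (-(N * E')))) := by
    intro S r rt
    by_cases h : S ≠ Finset.univ ∧ r ∈ R ∧ rt ∉ R ∧ (∀ k ∈ S, r k = rt k)
    · obtain ⟨h1, h2, h3, h4⟩ := h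
      obtain ⟨T, hT⟩ := ei_bound (N := N) W Pd hW hrate hPd S r rt h4 E'
        (hi S h1 r h2 rt (by simpa using h3) h4)
      exact ⟨T, fun _ _ _ _ => hT⟩
    · exact ⟨fun _ _ => True, fun h1 h2 h3 h4 => absurd ⟨h1, h2, h3, h4⟩ h⟩
  choose T hT using hex
  let good : CbkK 𝓧 N rate → (Fin N → 𝓨) → MsgK N rate → Prop := fun c y p =>
    rv p ∈ R ∧ (∀ p', rv p' ∈ R → p' ≠ p → WnK W (cw c p') y < WnK W (cw c p) y) ∧
    ∀ S rt, S ≠ Finset.univ → rt ∉ R → (∀ k ∈ S, rv p k = rt k) → T S (rv p) rt (cw c p) y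
  let D : CbkK 𝓧 N rate → (Fin N → 𝓨) → Option (MsgK N rate) := fun c y =>
    if h : ∃ p, good c y p then some h.choose else none
  have hDsome : ∀ c y p, D c y = some p → good c y p := by
    intro c y p h
    simp only [D] at h
    split_ifs at h with hg
    · have := hg.choose_spec
      rwa [Option.some.inj h] at this
  have hDgood : ∀ c y p, good c y p → D c y = some p := by
    intro c y p h
    have hg : ∃ p, good c y p := ⟨p, h⟩
    simp only [D, dif_pos hg]
    congr 1
    by_contra hne
    have h1 := h.2.1 _ hg.choose_spec.1 hne
    have h2 := hg.choose_spec.2.1 p h.1 (Ne.symm hne)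
    exact lt_asymm h1 h2
  refine ⟨D, fun c y p h => (hDsome c y p h).1, ?_⟩
  have hexp : 0 ≤ Real.exp (-(N * E')) := (Real.exp_pos _).le
  have key : ∀ (p : MsgK N rate) (E : CbkK 𝓧 N rate → (Fin N → 𝓨) → Prop)
      (F : Finset (Fin K) × (Fin K → Fin M) → CbkK 𝓧 N rate → (Fin N → 𝓨) → Prop),
      (∀ c y, E c y → ∃ i ∈ (Finset.univ : Finset (Finset (Fin K) × (Fin K → Fin M))), F i c y) →
      (∀ i, prTxK W rate Pd p (F i) ≤ Real.exp (-(N * E'))) →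
      prTxK W rate Pd p E ≤
        (Fintype.card (Finset (Fin K) × (Fin K → Fin M)) : ℝ) * Real.exp (-(N * E')) := by
    intro p E F h1 h2
    refine (prTx_le_sum W Pd hW hPd p Finset.univ E F h1).trans ?_
    refine (Finset.sum_le_sum fun i _ => h2 i).trans ?_
    rw [Finset.sum_const, nsmul_eq_mul, Finset.card_univ]
  refine Real.sSup_le ?_ (by positivity)
  rintro _ ⟨p, rfl⟩
  simp only
  split_ifs with hpR
  · refine key p _ (fun i c y => i.1 ≠ Finset.univ ∧ (∀ k ∈ i.1, rv p k = i.2 k) ∧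
      ((i.2 ∈ R ∧ ∃ p', (agr p p' = i.1 ∧ rv p' = i.2) ∧ WnK W (cw c p) y ≤ WnK W (cw c p') y) ∨
       (i.2 ∉ R ∧ ¬ T i.1 (rv p) i.2 (cw c p) y))) ?_ ?_
    · intro c y hne
      by_contra hno
      apply hne
      apply hDgood
      refine ⟨hpR, ?_, ?_⟩
      · intro p' hp' hpp
        by_contra hle
        exact hno ⟨(agr p p', rv p'), Finset.mem_univ _, agr_ne_univ (Ne.symm hpp),
          fun k hk => rv_eq_of_mem_agr hk, Or.inl ⟨hp', p', ⟨rfl, rfl⟩, not_lt.mp hle⟩⟩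
      · intro S rt hS hrt hag
        by_contra hT'
        exact hno ⟨(S, rt), Finset.mem_univ _, hS, hag, Or.inr ⟨hrt, hT'⟩⟩
    · rintro ⟨S, rt⟩
      by_cases hc : S ≠ Finset.univ ∧ (∀ k ∈ S, rv p k = rt k)
      · by_cases hrt : rt ∈ R
        · refine (prTx_mono W Pd hW hPd p _ _ ?_).trans
            (em_bound W Pd hW hrate hPd S (rv p) rt E' (hm S hc.1 _ hpR rt hrt hc.2) p rfl)
          rintro c y ⟨_, _, h | h⟩
          · exact h.2
          · exact absurd hrt h.1
        · refine (prTx_mono W Pd hW hPd p _ _ ?_).trans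
            ((hT S (rv p) rt hc.1 hpR hrt hc.2).1 p rfl)
          rintro c y ⟨_, _, h | h⟩
          · exact absurd h.1 hrt
          · exact h.2
      · rw [prTx_false W Pd p _ (fun c y h => hc ⟨h.1, h.2.1⟩)]
        exact hexp
  · refine key p _ (fun i c y => i.1 ≠ Finset.univ ∧ i.2 ∈ R ∧ (∀ k ∈ i.1, i.2 k = rv p k) ∧
      ∃ p', (agr p p' = i.1 ∧ rv p' = i.2) ∧ T i.1 i.2 (rv p) (cw c p') y) ?_ ?_
    · intro c y hne
      obtain ⟨p', hp'⟩ := Option.ne_none_iff_exists'.mp hne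
      have hg := hDsome c y p' hp'
      have hpp : p ≠ p' := fun h => hpR (h ▸ hg.1)
      have hag : ∀ k ∈ agr p p', rv p' k = rv p k := fun k hk => (rv_eq_of_mem_agr hk).symm
      exact ⟨(agr p p', rv p'), Finset.mem_univ _, agr_ne_univ hpp, hg.1, hag, p', ⟨rfl, rfl⟩,
        hg.2.2 _ _ (agr_ne_univ hpp) hpR hag⟩
    · rintro ⟨S, r⟩
      by_cases hc : S ≠ Finset.univ ∧ r ∈ R ∧ (∀ k ∈ S, r k = rv p k)
      · refine (prTx_mono W Pd hW hPd p _ _ ?_).trans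
            ((hT S r (rv p) hc.1 hc.2.1 hpR hc.2.2).2 p rfl)
        rintro c y ⟨_, _, _, h⟩
        exact h
      · rw [prTx_false W Pd p _ (fun c y h => hc ⟨h.1, h.2.1, h.2.2.1⟩)]
        exact hexp

lemma le_PesK (R : Finset (Fin K → Fin M))
    (D : CbkK 𝓧 N rate → (Fin N → 𝓨) → Option (MsgK N rate)) (p : MsgK N rate) :
    (if rv p ∈ R then prTxK W rate Pd p (fun c y => D c y ≠ some p)
    else prTxK W rate Pd p (fun c y => D c y ≠ none)) ≤ PesK W N rate Pd R D :=
  le_csSup (Set.finite_range _).bddAbove (Set.mem_range_self p)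

lemma PesK_nonneg (hW : IsMAC W) (hPd : ∀ k i, IsDist (Pd k i)) (R : Finset (Fin K → Fin M))
    (D : CbkK 𝓧 N rate → (Fin N → 𝓨) → Option (MsgK N rate)) : 0 ≤ PesK W N rate Pd R D := by
  refine Real.sSup_nonneg ?_
  rintro _ ⟨p, rfl⟩
  simp only
  split_ifs <;> exact prTx_nonneg W Pd hW hPd p _

lemma PesK_le_one (hW : IsMAC W) (hPd : ∀ k i, IsDist (Pd k i)) (R : Finset (Fin K → Fin M))
    (D : CbkK 𝓧 N rate → (Fin N → 𝓨) → Option (MsgK N rate)) : PesK W N rate Pd R D ≤ 1 := by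
  refine Real.sSup_le ?_ zero_le_one
  rintro _ ⟨p, rfl⟩
  simp only
  split_ifs <;> exact prTx_le_one W Pd hW hPd p _

lemma PN_const (P : ∀ k, 𝓧 k → ℝ) (v : ∀ k, 𝓧 k) :
    PN (N := N) P (fun k _ => v k) = (∏ k, P k (v k)) ^ N := by
  simp [PN, Finset.prod_pow]

lemma conv_witness (hW : IsMAC W) (hrate : ∀ k i, 0 ≤ rate k i) (hPd : ∀ k i, IsDist (Pd k i))
    (S : Finset (Fin K)) (r rt : Fin K → Fin M) (hS : ∀ k ∈ S, r k = rt k)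
    (hE : 0 < EiK W S (∑ k ∈ Sᶜ, rate k (r k)) (fun k => Pd k (r k)) (fun k => Pd k (rt k))) :
    ∃ (x x' : ∀ k, 𝓧 k) (y : 𝓨), (∀ k ∈ S, x k = x' k) ∧ 0 < ∏ k, Pd k (r k) (x k) ∧
      0 < ∏ k, Pd k (rt k) (x' k) ∧ 0 < W x y ∧ 0 < W x' y := by
  obtain ⟨ρ, s, hρ0, hρ1, hs0, hsρ, hE⟩ := ei_params W hE
  have hR : 0 ≤ ∑ k ∈ Sᶜ, rate k (r k) := Finset.sum_nonneg fun k _ => hrate _ _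
  have hG : GiK W S (fun k => Pd k (r k)) (fun k => Pd k (rt k)) ρ s ≠ 0 := by
    intro h
    rw [h, Real.log_zero] at hE
    nlinarith
  rw [GiK_eq W S _ _ (fun k => hPd k _) (fun k => hPd k _), Gg] at hG
  obtain ⟨y, _, hy⟩ := Finset.exists_ne_zero_of_sum_ne_zero hG
  obtain ⟨v, _, hv⟩ := Finset.exists_ne_zero_of_sum_ne_zero hy
  have hv1 := left_ne_zero_of_mul hv
  have hv2 := right_ne_zero_of_mul hv
  have h1 : Av W S (fun k => Pd k (r k)) (s / (s + ρ)) v y ≠ 0 := by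
    intro h
    rw [h, Real.zero_rpow (by linarith), zero_mul] at hv2
    exact hv2 rfl
  have h2 : Av W S (fun k => Pd k (rt k)) 1 v y ≠ 0 := by
    intro h
    rw [h, Real.zero_rpow (x := 1 - s) (by linarith), mul_zero] at hv2
    exact hv2 rfl
  obtain ⟨u, _, hu⟩ := Finset.exists_ne_zero_of_sum_ne_zero h1
  obtain ⟨u', _, hu'⟩ := Finset.exists_ne_zero_of_sum_ne_zero h2
  have hu1 := left_ne_zero_of_mul hu
  have hu2 := right_ne_zero_of_mul hu
  have hu1' := left_ne_zero_of_mul hu'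
  have hu2' := right_ne_zero_of_mul hu'
  rw [Finset.prod_ne_zero_iff] at hv1 hu1 hu1'
  refine ⟨mrg S v u, mrg S v u', y, ?_, ?_, ?_, ?_, ?_⟩
  · intro k hk; simp [mrg, hk]
  · refine Finset.prod_pos fun k _ => ((hPd k _).1 _).lt_of_ne' ?_
    by_cases hk : k ∈ S
    · simpa [mrg, hk] using hv1 k (Finset.mem_univ k)
    · simpa [mrg, hk] using hu1 k (Finset.mem_univ k)
  · refine Finset.prod_pos fun k _ => ((hPd k _).1 _).lt_of_ne' ?_
    by_cases hk : k ∈ S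
    · simpa [mrg, hk, hS k hk] using hv1 k (Finset.mem_univ k)
    · simpa [mrg, hk] using hu1' k (Finset.mem_univ k)
  · refine (hW.1 _ _).lt_of_ne' fun h => hu2 ?_
    rw [h, Real.zero_rpow]
    positivity
  · refine (hW.1 _ _).lt_of_ne' fun h => hu2' ?_
    rw [h, Real.zero_rpow one_ne_zero]

lemma converse (hW : IsMAC W) (hrate : ∀ k i, 0 ≤ rate k i) (hPd : ∀ k i, IsDist (Pd k i))
    (R : Finset (Fin K → Fin M)) (r rt : Fin K → Fin M) (hr : r ∈ R) (hrt : rt ∉ R)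
    (hE : 0 < EiK W (Finset.univ.filter fun k => r k = rt k)
      (∑ k ∈ (Finset.univ.filter fun k => r k = rt k)ᶜ, rate k (r k))
      (fun k => Pd k (r k)) (fun k => Pd k (rt k))) :
    ∃ δ : ℝ, 0 < δ ∧ ∀ (N : ℕ) (D : CbkK 𝓧 N rate → (Fin N → 𝓨) → Option (MsgK N rate)),
      δ ^ N / 2 ≤ PesK W N rate Pd R D := by
  obtain ⟨x, x', y, hxx, hP, hQ, hWx, hWx'⟩ := conv_witness W Pd hW hrate hPd
    (Finset.univ.filter fun k => r k = rt k) r rt (by simp) hE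
  set μ := min (W x y) (W x' y) with hμ
  have hμ0 : 0 < μ := lt_min hWx hWx'
  refine ⟨(∏ k, Pd k (r k) (x k)) * (∏ k, Pd k (rt k) (x' k)) * μ, by positivity, ?_⟩
  intro N D
  have hnum : ∀ k i, 0 < numMsgK N rate k i := by
    intro k i
    refine Nat.floor_pos.mpr (Real.one_le_exp ?_)
    exact mul_nonneg (Nat.cast_nonneg _) (hrate k i)
  let p : MsgK N rate := fun k => ⟨r k, ⟨0, hnum k _⟩⟩
  let p' : MsgK N rate := fun k => ⟨rt k, ⟨0, hnum k _⟩⟩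
  have hp : rv p = r := rfl
  have hp' : rv p' = rt := rfl
  let X : ∀ k, Fin N → 𝓧 k := fun k _ => x k
  let X' : ∀ k, Fin N → 𝓧 k := fun k _ => x' k
  let Y : Fin N → 𝓨 := fun _ => y
  have hXY : μ ^ N ≤ WnK W X Y := by
    have : WnK W X Y = W x y ^ N := by simp [WnK, X, Y]
    rw [this]
    exact pow_le_pow_left₀ hμ0.le (min_le_left _ _) N
  have hXY' : μ ^ N ≤ WnK W X' Y := by
    have : WnK W X' Y = W x' y ^ N := by simp [WnK, X', Y]
    rw [this]
    exact pow_le_pow_left₀ hμ0.le (min_le_right _ _) N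
  have h1 : prTxK W rate Pd p (fun c y => D c y ≠ some p) ≤ PesK W N rate Pd R D := by
    have := le_PesK W Pd R D p
    rwa [if_pos (hp ▸ hr)] at this
  have h2 : prTxK W rate Pd p' (fun c y => D c y ≠ none) ≤ PesK W N rate Pd R D := by
    have := le_PesK W Pd R D p'
    rwa [if_neg (hp' ▸ hrt)] at this
  let H : CbkK 𝓧 N rate → ℝ := fun c => if cw c p = X ∧ cw c p' = X' then μ ^ N else 0
  have h3 : ∑ c : CbkK 𝓧 N rate, cbkProbK rate Pd c * H c
      ≤ prTxK W rate Pd p (fun c y => D c y ≠ some p) +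
        prTxK W rate Pd p' (fun c y => D c y ≠ none) := by
    unfold prTxK
    rw [← Finset.sum_add_distrib]
    refine Finset.sum_le_sum fun c _ => ?_
    have hn1 : ∀ y ∈ Finset.univ, 0 ≤ cbkProbK rate Pd c * WnK W (cw c p) y *
        (@ite ℝ (D c y ≠ some p) (Classical.propDecidable _) 1 0) := fun y _ =>
      mul_nonneg (prTx_weight_nonneg W Pd hW hPd p c y) (by split_ifs <;> norm_num)
    have hn2 : ∀ y ∈ Finset.univ, 0 ≤ cbkProbK rate Pd c * WnK W (cw c p') y *
        (@ite ℝ (D c y ≠ none) (Classical.propDecidable _) 1 0) := fun y _ =>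
      mul_nonneg (prTx_weight_nonneg W Pd hW hPd p' c y) (by split_ifs <;> norm_num)
    have s1 := Finset.single_le_sum hn1 (Finset.mem_univ Y)
    have s2 := Finset.single_le_sum hn2 (Finset.mem_univ Y)
    have hc := cbk_nonneg Pd hPd c
    refine le_trans ?_ (add_le_add s1 s2)
    have t1 := hn1 Y (Finset.mem_univ _)
    have t2 := hn2 Y (Finset.mem_univ _)
    by_cases hcc : cw c p = X ∧ cw c p' = X'
    · simp only [H, if_pos hcc]
      by_cases hD : D c Y = none
      · refine le_add_of_le_of_nonneg ?_ t2
        have : D c Y ≠ some p := by rw [hD]; simp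
        rw [if_pos this, mul_one, hcc.1]
        exact mul_le_mul_of_nonneg_left hXY hc
      · refine le_add_of_nonneg_of_le t1 ?_
        have : D c Y ≠ none := hD
        rw [if_pos this, mul_one, hcc.2]
        exact mul_le_mul_of_nonneg_left hXY' hc
    · simp only [H, if_neg hcc, mul_zero]
      exact add_nonneg t1 t2
  have h4 : PN (fun k => Pd k (r k)) X * (PN (fun k => Pd k (rt k)) X' * μ ^ N)
      ≤ ∑ c : CbkK 𝓧 N rate, cbkProbK rate Pd c * H c := by
    rw [cbk_mix Pd hPd p]
    have a1 := cbk_marg_aux Pd hPd p X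
    have a2 := cbk_marg_aux Pd hPd p' X'
    rw [hp] at a1
    rw [hp'] at a2
    rw [← a1, ← a2, Finset.sum_mul]
    refine Finset.sum_le_sum fun c _ => ?_
    have hc := cbk_nonneg Pd hPd c
    rw [mul_assoc]
    refine mul_le_mul_of_nonneg_left ?_ hc
    rw [Finset.sum_mul, Finset.mul_sum]
    refine Finset.sum_le_sum fun d _ => ?_
    have hd := cbk_nonneg Pd hPd d
    have hH : 0 ≤ H (mixC p c d) := by simp only [H]; split_ifs <;> positivity
    by_cases c1 : cw c p = X
    · by_cases c2 : cw d p' = X'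
      · have : cw (mixC p c d) p = X ∧ cw (mixC p c d) p' = X' := by
          rw [cw_mixC_self, cw_mixC, c1, c2]
          refine ⟨rfl, ?_⟩
          funext k
          by_cases hk : k ∈ agr p p'
          · have hk2 : r k = rt k := rv_eq_of_mem_agr hk
            simp only [mrg, hk, if_true, X, X']
            rw [hxx k (by simp [hk2])]
          · simp only [mrg, hk, if_false]
        simp only [H, if_pos this, if_pos c1, if_pos c2]
        linarith
      · rw [if_neg c2]
        simp only [mul_zero, zero_mul]
        positivity
    · rw [if_neg c1, zero_mul]
      positivity
  have h5 : PN (fun k => Pd k (r k)) X * (PN (fun k => Pd k (rt k)) X' * μ ^ N)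
      = ((∏ k, Pd k (r k) (x k)) * (∏ k, Pd k (rt k) (x' k)) * μ) ^ N := by
    rw [PN_const, PN_const, mul_pow, mul_pow, mul_assoc]
  rw [h5] at h4
  linarith

end system


/-- `K`-user system error exponent (Corollary 2). -/
theorem stmt3 {K : ℕ} (hK : 1 ≤ K) {𝓧 : Fin K → Type*}
    [∀ k, Fintype (𝓧 k)] [∀ k, Nonempty (𝓧 k)]
    {𝓨 : Type*} [Fintype 𝓨] [Nonempty 𝓨]
    (W : (∀ k, 𝓧 k) → 𝓨 → ℝ) (hW : IsMAC W)
    (M : ℕ)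
    (rate : Fin K → Fin M → ℝ) (hrate : ∀ k i, 0 ≤ rate k i)
    (Pd : ∀ k, Fin M → 𝓧 k → ℝ) (hPd : ∀ k i, IsDist (Pd k i))
    (R : Finset (Fin K → Fin M)) (hR : R.Nonempty)
    (hRc : (Finset.univ \ R).Nonempty) :
    ∃ D : (N : ℕ) → CbkK 𝓧 N rate → (Fin N → 𝓨) → Option (MsgK N rate),
      (∀ N c y p, D N c y = some p → rv p ∈ R) ∧
      min
        (sInf {e : ℝ | ∃ S : Finset (Fin K), S ≠ Finset.univ ∧
          ∃ r ∈ R, ∃ rt ∈ R, (∀ k ∈ S, r k = rt k) ∧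
            e = EmK W S (∑ k ∈ Sᶜ, rate k (rt k))
                  (fun k => Pd k (r k)) (fun k => Pd k (rt k))})
        (sInf {e : ℝ | ∃ S : Finset (Fin K), S ≠ Finset.univ ∧
          ∃ r ∈ R, ∃ rt ∈ Finset.univ \ R, (∀ k ∈ S, r k = rt k) ∧
            e = EiK W S (∑ k ∈ Sᶜ, rate k (r k))
                  (fun k => Pd k (r k)) (fun k => Pd k (rt k))})
        ≤ Filter.liminf
            (fun N : ℕ => -(1 / (N : ℝ)) * Real.log (PesK W N rate Pd R (D N)))
            Filter.atTop := by
  obtain ⟨r₀, hr₀⟩ := hR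
  obtain ⟨rt₀, hrt₀⟩ := hRc
  set A : Set ℝ := {e : ℝ | ∃ S : Finset (Fin K), S ≠ Finset.univ ∧
          ∃ r ∈ R, ∃ rt ∈ R, (∀ k ∈ S, r k = rt k) ∧
            e = EmK W S (∑ k ∈ Sᶜ, rate k (rt k))
                  (fun k => Pd k (r k)) (fun k => Pd k (rt k))} with hA
  set B : Set ℝ := {e : ℝ | ∃ S : Finset (Fin K), S ≠ Finset.univ ∧
          ∃ r ∈ R, ∃ rt ∈ Finset.univ \ R, (∀ k ∈ S, r k = rt k) ∧
            e = EiK W S (∑ k ∈ Sᶜ, rate k (r k))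
                  (fun k => Pd k (r k)) (fun k => Pd k (rt k))} with hB
  have hAf : BddBelow A := by
    refine Set.Finite.bddBelow (Set.Finite.subset (Set.finite_range
      (fun q : Finset (Fin K) × (Fin K → Fin M) × (Fin K → Fin M) =>
        EmK W q.1 (∑ k ∈ q.1ᶜ, rate k (q.2.2 k))
          (fun k => Pd k (q.2.1 k)) (fun k => Pd k (q.2.2 k)))) ?_)
    rintro e ⟨S, _, r, _, rt, _, _, rfl⟩
    exact ⟨(S, r, rt), rfl⟩
  have hBf : BddBelow B := by
    refine Set.Finite.bddBelow (Set.Finite.subset (Set.finite_range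
      (fun q : Finset (Fin K) × (Fin K → Fin M) × (Fin K → Fin M) =>
        EiK W q.1 (∑ k ∈ q.1ᶜ, rate k (q.2.1 k))
          (fun k => Pd k (q.2.1 k)) (fun k => Pd k (q.2.2 k)))) ?_)
    rintro e ⟨S, _, r, _, rt, _, _, rfl⟩
    exact ⟨(S, r, rt), rfl⟩
  set E := min (sInf A) (sInf B) with hEdef
  have hEA : ∀ e ∈ A, E ≤ e := fun e he => (min_le_left _ _).trans (csInf_le hAf he)
  have hEB : ∀ e ∈ B, E ≤ e := fun e he => (min_le_right _ _).trans (csInf_le hBf he)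
  by_cases hE0 : E ≤ 0
  · refine ⟨fun N c y => none, fun N c y p h => by simp at h, hE0.trans ?_⟩
    rw [Filter.liminf_eq]
    refine Real.sSup_nonneg' ⟨0, ?_, le_rfl⟩
    refine Filter.Eventually.of_forall fun N => ?_
    have h1 := Real.log_nonpos (PesK_nonneg (N := N) (rate := rate) W Pd hW hPd R (fun c y => none))
      (PesK_le_one (N := N) (rate := rate) W Pd hW hPd R (fun c y => none))
    have h2 : (0:ℝ) ≤ 1 / (N:ℝ) := by positivity
    show (0:ℝ) ≤ -(1 / (N:ℝ)) * _
    nlinarith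
  push Not at hE0
  have hach := fun N : ℕ => achiev (N := N) (rate := rate) W Pd hW hrate hPd R
    (E - 1 / ((N:ℝ) + 1))
    (fun S hS r hr rt hrt hag => by
      have h1 := hEA _ ⟨S, hS, r, hr, rt, hrt, hag, rfl⟩
      have h2 : (0:ℝ) < 1 / ((N:ℝ) + 1) := by positivity
      linarith)
    (fun S hS r hr rt hrt hag => by
      have h1 := hEB _ ⟨S, hS, r, hr, rt, hrt, hag, rfl⟩
      have h2 : (0:ℝ) < 1 / ((N:ℝ) + 1) := by positivity
      linarith)
  choose D hDR hDP using hach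
  refine ⟨D, hDR, ?_⟩
  have hrt₀' : rt₀ ∉ R := (Finset.mem_sdiff.mp hrt₀).2
  have hne : (Finset.univ.filter fun k => r₀ k = rt₀ k) ≠ Finset.univ := by
    intro h
    apply hrt₀'
    have : r₀ = rt₀ := by
      funext k
      have hk : k ∈ Finset.univ.filter fun k => r₀ k = rt₀ k := by rw [h]; exact Finset.mem_univ k
      exact (Finset.mem_filter.mp hk).2
    exact this ▸ hr₀
  obtain ⟨δ, hδ0, hδ⟩ := converse (rate := rate) W Pd hW hrate hPd R r₀ rt₀ hr₀ hrt₀'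
    (lt_of_lt_of_le hE0 (hEB _ ⟨_, hne, r₀, hr₀, rt₀, hrt₀,
      fun k hk => (Finset.mem_filter.mp hk).2, rfl⟩))
  set C : ℝ := (Fintype.card (Finset (Fin K) × (Fin K → Fin M)) : ℝ) with hC
  have hC0 : 0 < C := by
    rw [hC]
    have : Nonempty (Finset (Fin K) × (Fin K → Fin M)) := ⟨(∅, r₀)⟩
    exact_mod_cast Fintype.card_pos
  have hpos : ∀ N, 0 < PesK W N rate Pd R (D N) := fun N =>
    lt_of_lt_of_le (by positivity) (hδ N (D N))
  have hup : ∀ N : ℕ, 1 ≤ N → -(1 / (N : ℝ)) * Real.log (PesK W N rate Pd R (D N))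
      ≤ Real.log 2 - Real.log δ := by
    intro N hN
    have hN' : (1:ℝ) ≤ N := by exact_mod_cast hN
    have h1 := Real.log_le_log (by positivity) (hδ N (D N))
    rw [Real.log_div (by positivity) (by norm_num), Real.log_pow] at h1
    have h2 : 0 < Real.log 2 := Real.log_pos (by norm_num)
    rw [neg_mul, one_div, ← div_eq_inv_mul, ← neg_div, div_le_iff₀ (by linarith)]
    nlinarith
  have hlow : ∀ N : ℕ, 1 ≤ N → E - (Real.log C + 1) / N ≤
      -(1 / (N : ℝ)) * Real.log (PesK W N rate Pd R (D N)) := by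
    intro N hN
    have hN' : (1:ℝ) ≤ N := by exact_mod_cast hN
    have hN0 : (0:ℝ) < N := by linarith
    have h1 := Real.log_le_log (hpos N) (hDP N)
    rw [Real.log_mul hC0.ne' (Real.exp_pos _).ne', Real.log_exp] at h1
    have h2 : (N:ℝ) * (1 / ((N:ℝ) + 1)) ≤ 1 := by
      rw [mul_one_div, div_le_one (by linarith)]
      linarith
    rw [neg_mul, one_div, ← div_eq_inv_mul, ← neg_div, le_div_iff₀ hN0, sub_mul,
      div_mul_cancel₀ _ hN0.ne']
    nlinarith
  have hcob : Filter.IsCoboundedUnder (· ≥ ·) Filter.atTop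
      (fun N : ℕ => -(1 / (N : ℝ)) * Real.log (PesK W N rate Pd R (D N))) := by
    apply Filter.IsBoundedUnder.isCoboundedUnder_ge
    refine ⟨Real.log 2 - Real.log δ, ?_⟩
    rw [Filter.eventually_map]
    filter_upwards [Filter.eventually_ge_atTop 1] with N hN
    exact hup N hN
  refine le_of_forall_lt_imp_le_of_dense fun e he => ?_
  refine Filter.le_liminf_of_le hcob ?_
  have hlim : Filter.Tendsto (fun N : ℕ => E - (Real.log C + 1) / (N:ℝ)) Filter.atTop
      (nhds (E - 0)) :=
    tendsto_const_nhds.sub (tendsto_const_div_atTop_nhds_zero_nat _)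
  rw [sub_zero] at hlim
  filter_upwards [hlim.eventually (lt_mem_nhds he), Filter.eventually_ge_atTop 1] with N h1 hN
  exact h1.le.trans (hlow N hN)
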